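/- arXiv:1412.6908 — 2 statements merged into one kernel-verified Lean document; each statement's English description precedes it below -/
import Mathlib

section
/- For every automorphism φ of the free group F_n of finite rank n, the fixed subgroup Fix(φ) = {g ∈ F_n : φ(g) = g} has rank at most n. -/
/-- The rank of a subgroup: the minimal cardinality of a generating set.
For subgroups of free groups (which are free by Nielsen–Schreier) this is the
cardinality of a free basis. -/
noncomputable def rk {G : Type*} [Group G] (H : Subgroup G) : Cardinal :=
  ⨅ S : {S : Set G // Subgroup.closure S = H}, Cardinal.mk S.1

/-- A subgroup `H` is inert if `rk (H ⊓ K) ≤ rk K` for every finitely generated `K`. -/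
def IsInert {G : Type*} [Group G] (H : Subgroup G) : Prop :=
  ∀ K : Subgroup G, K.FG → rk (H ⊓ K) ≤ rk K

/-- `stage x i` is the subgroup generated by the first `i` elements of `x`. -/
def stage {n : ℕ} {F : Type*} [Group F] (x : Fin n → F) (i : ℕ) : Subgroup F :=
  Subgroup.closure (x '' {j | (j : ℕ) < i})

/-- `x` is an ordered free basis of `F`. -/
def IsOrderedBasis {n : ℕ} {F : Type*} [Group F] (x : Fin n → F) : Prop :=
  Function.Bijective (FreeGroup.lift x)

/-- `H` is in echelon form with respect to the ordered basis `x`: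
`rk (H ⊓ F_i) ≤ rk (H ⊓ F_{i-1}) + 1` for `i = 1, …, n`. -/
def InEchelonForm {n : ℕ} {F : Type*} [Group F] (x : Fin n → F) (H : Subgroup F) : Prop :=
  ∀ i : ℕ, i < n → rk (H ⊓ stage x (i + 1)) ≤ rk (H ⊓ stage x i) + 1

/-- `H` is an echelon subgroup: it is in echelon form with respect to
some ordered free basis. -/
def IsEchelon {n : ℕ} (H : Subgroup (FreeGroup (Fin n))) : Prop :=
  ∃ x : Fin n → FreeGroup (Fin n), IsOrderedBasis x ∧ InEchelonForm x H

/-- A 1-generator (subgroup) endomorphism: an endomorphism fixing all but (possibly)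
one member of some set of free generators. -/
def IsOneGenEndo {G : Type*} [Group G] (φ : G →* G) : Prop :=
  ∃ (ι : Type) (b : FreeGroupBasis ι G) (s : Set ι),
    s.Subsingleton ∧ ∀ i ∉ s, φ (b i) = b i

/-- The subgroup of points fixed by an endomorphism. -/
def fixedSubgroup {G : Type*} [Group G] (φ : G →* G) : Subgroup G where
  carrier := {g | φ g = g}
  one_mem' := by simp
  mul_mem' := by intro a b ha hb; simp only [Set.mem_setOf_eq, map_mul] at *; rw [ha, hb]
  inv_mem' := by intro a ha; simp only [Set.mem_setOf_eq, map_inv] at *; rw [ha]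

/-- An element is primitive if it belongs to some free basis. -/
def IsPrimitive {n : ℕ} (g : FreeGroup (Fin n)) : Prop :=
  ∃ x : Fin n → FreeGroup (Fin n), IsOrderedBasis x ∧ ∃ j, x j = g

/-!
Let `ψ` be an automorphism of a free group `G` of rank `r`, and let `P` be the subgroup of its
periodic elements. Then both `P` and `Fix ψ` have rank at most `r`.

*Periodic elements.* Along a basis of `G`, every `ℓ²` family of increments is the gradient of a
function on `G`. Passing to the increments of that function along finitely many members `h j` of a
basis of `P` gives a bounded operator `T : ℓ²(I × G) → ℓ²(J × G)` commuting with right translations.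
Some power `θ` of `ψ` fixes all `h j`, so `θ` preserves the orthogonal complement of the range of
`T`. The projection of `δ_(j, 1)` to that complement is `θ`-invariant, and being square-summable it
vanishes off `P`, where the orbits of `θ` are infinite. But `T` attains on `J × P` every
`δ_(j, u)` with `u ∈ P`, because a function on `P` with finitely supported gradient extends to an
almost invariant function on `G`. So the projection is zero, and by translation `T` has dense range;
comparing von Neumann dimensions gives `|J| ≤ |I| = r`.

*Descent.* As `P` is finitely generated, `P = Fix (ψ ^ m)` for some `m ≠ 0`, and `Fix ψ` is reached
from it by successively taking fixed subgroups of automorphisms of prime order `p`. For these, every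
homomorphism `χ : Fix ψ → ℤ/p` extends to `G`, and counting homomorphisms bounds the rank. To extend
`χ`, choose a `ψ`-invariant function `f : G → ℤ/p` with `f (h * g) = χ h * f g`, written
multiplicatively, that is constant on the components of the complement of a neighbourhood of `Fix ψ`
in the Cayley tree; such a function exists because no nontrivial element of `Fix ψ` stabilises a
component. Then `f (g * u) / f g` differs from `1` on finitely many cosets `Fix ψ * g` only, and its
product over all cosets is a homomorphism in `u`. For `u ∈ Fix ψ` the cosets other than `Fix ψ`
itself fall into `ψ`-orbits of length `p` and contribute `1`, which leaves `χ u`.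
-/

namespace BestvinaHandel

section CayleyTree

variable {X : Type*} [DecidableEq X]

/-- The word metric on a free group, that is, the path metric of its Cayley tree. -/
def wordDist (a b : FreeGroup X) : ℕ := (a⁻¹ * b).norm

/-- `IsBetween a t b`: the vertex `t` lies on the geodesic from `a` to `b` in the Cayley tree. -/
def IsBetween (a t b : FreeGroup X) : Prop :=
  wordDist a t + wordDist t b = wordDist a b

@[simp]
theorem wordDist_self (a : FreeGroup X) : wordDist a a = 0 := by simp [wordDist]

@[simp]
theorem wordDist_one_left (a : FreeGroup X) : wordDist 1 a = a.norm := by simp [wordDist]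

@[simp]
theorem wordDist_mul_left (g a b : FreeGroup X) : wordDist (g * a) (g * b) = wordDist a b := by
  simp [wordDist, mul_assoc]

theorem wordDist_comm (a b : FreeGroup X) : wordDist a b = wordDist b a := by
  rw [wordDist, wordDist, ← FreeGroup.norm_inv_eq, mul_inv_rev, inv_inv]

theorem wordDist_triangle (a t b : FreeGroup X) : wordDist a b ≤ wordDist a t + wordDist t b := by
  simpa [wordDist, mul_assoc] using FreeGroup.norm_mul_le (a⁻¹ * t) (t⁻¹ * b)

theorem eq_of_wordDist_eq_zero {a b : FreeGroup X} (h : wordDist a b = 0) : a = b :=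
  inv_mul_eq_one.1 (FreeGroup.norm_eq_zero.1 h)

namespace IsBetween

variable {a b c t : FreeGroup X}

theorem left (a b : FreeGroup X) : IsBetween a a b := by simp [IsBetween]

theorem symm (h : IsBetween a t b) : IsBetween b t a := by
  rwa [IsBetween, wordDist_comm b t, wordDist_comm t a, wordDist_comm b a, add_comm]

theorem mul_left_iff (g : FreeGroup X) :
    IsBetween (g * a) (g * t) (g * b) ↔ IsBetween a t b := by simp [IsBetween]

theorem trans_right (h₁ : IsBetween a t b) (h₂ : IsBetween a b c) : IsBetween a t c := by
  have := wordDist_triangle a t c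
  have := wordDist_triangle t b c
  unfold IsBetween at *
  omega

theorem between_left_of_between_right (h₁ : IsBetween a b c) (h₂ : IsBetween b t c) :
    IsBetween a b t := by
  have := wordDist_triangle a b t
  have := wordDist_triangle a t c
  unfold IsBetween at *
  omega

end IsBetween

theorem norm_inv_mul_of_head?_ne {u v : FreeGroup X}
    (h : ∀ a ∈ u.toWord.head?, ∀ b ∈ v.toWord.head?, a ≠ b) :
    (u⁻¹ * v).norm = u.norm + v.norm := by
  have reduced : FreeGroup.IsReduced (FreeGroup.invRev u.toWord ++ v.toWord) := by
    refine List.isChain_append.2 ⟨?_, FreeGroup.isReduced_toWord, ?_⟩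
    · exact FreeGroup.toWord_inv u ▸ FreeGroup.isReduced_toWord (x := u⁻¹)
    · rintro ⟨x, ε⟩ hx ⟨y, δ⟩ hy (rfl : x = y)
      simp only [FreeGroup.invRev, List.getLast?_reverse, List.head?_map, Option.mem_def,
        Option.map_eq_some_iff] at hx
      obtain ⟨⟨x', ε'⟩, hu, h'⟩ := hx
      obtain ⟨rfl, rfl⟩ := Prod.mk.inj h'
      have hne : ε' ≠ δ := fun e ↦ h _ hu _ hy (by rw [e])
      exact Bool.not_eq.2 hne
  rw [FreeGroup.norm, FreeGroup.toWord_mul, FreeGroup.toWord_inv, reduced.reduce_eq]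
  simp [FreeGroup.norm]

theorem head?_ne_of_norm_inv_mul {u v : FreeGroup X} (h : (u⁻¹ * v).norm = u.norm + v.norm) :
    ∀ a ∈ u.toWord.head?, ∀ b ∈ v.toWord.head?, a ≠ b := by
  have split_head {w : FreeGroup X} {a : X × Bool} (ha : a ∈ w.toWord.head?) :
      w = FreeGroup.mk [a] * FreeGroup.mk w.toWord.tail ∧
        (FreeGroup.mk w.toWord.tail).norm < w.norm := by
    obtain ⟨l, hl⟩ := List.head?_eq_some_iff.1 ha
    have := FreeGroup.norm_mk_le (L₁ := l)
    refine ⟨?_, by simp only [hl, List.tail_cons, FreeGroup.norm, List.length_cons] at *; omega⟩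
    rw [hl, FreeGroup.mul_mk, List.tail_cons, List.singleton_append, ← hl, FreeGroup.mk_toWord]
  rintro a hu _ hv rfl
  obtain ⟨eu, nu⟩ := split_head hu
  obtain ⟨ev, nv⟩ := split_head hv
  set u' := FreeGroup.mk u.toWord.tail
  set v' := FreeGroup.mk v.toWord.tail
  have cancel : u⁻¹ * v = u'⁻¹ * v' := by rw [eu, ev]; group
  have := FreeGroup.norm_mul_le u'⁻¹ v'
  rw [← cancel, FreeGroup.norm_inv_eq] at this
  omega

theorem isBetween_iff_norm_inv_mul {a t b : FreeGroup X} : IsBetween a t b ↔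
    ((t⁻¹ * a)⁻¹ * (t⁻¹ * b)).norm = (t⁻¹ * a).norm + (t⁻¹ * b).norm := by
  rw [IsBetween, wordDist_comm a t, eq_comm]
  simp [wordDist, mul_assoc]

theorem IsBetween.split {a t c : FreeGroup X} (h : IsBetween a t c) (b : FreeGroup X) :
    IsBetween a t b ∨ IsBetween b t c := by
  rw [isBetween_iff_norm_inv_mul] at h
  by_contra! hcon
  obtain ⟨h₁, h₂⟩ := hcon
  have h₁ := mt norm_inv_mul_of_head?_ne (mt isBetween_iff_norm_inv_mul.2 h₁)
  have h₂ := mt norm_inv_mul_of_head?_ne (mt isBetween_iff_norm_inv_mul.2 h₂)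
  push Not at h₁ h₂
  obtain ⟨x, hx, _, hy, rfl⟩ := h₁
  obtain ⟨x', hx', _, hy', rfl⟩ := h₂
  obtain rfl : x = x' := Option.some.inj (hy.symm.trans hx')
  exact head?_ne_of_norm_inv_mul h x hx x hy' rfl

theorem exists_isBetween_one_of_le_norm {g : FreeGroup X} {j : ℕ} (hj : j ≤ g.norm) :
    ∃ t, IsBetween 1 t g ∧ t.norm = j := by
  set t := FreeGroup.mk (g.toWord.take j)
  set s := FreeGroup.mk (g.toWord.drop j)
  have hg : t * s = g := by
    rw [FreeGroup.mul_mk, List.take_append_drop, FreeGroup.mk_toWord]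
  have ht : t.norm ≤ j := FreeGroup.norm_mk_le.trans (by simp)
  have hs : s.norm ≤ g.norm - j :=
    FreeGroup.norm_mk_le.trans (by rw [List.length_drop, FreeGroup.norm])
  have hle : g.norm ≤ t.norm + s.norm := hg ▸ FreeGroup.norm_mul_le t s
  have hts : wordDist t g = s.norm := by rw [wordDist, ← hg, inv_mul_cancel_left]
  refine ⟨t, ?_, by omega⟩
  rw [IsBetween, hts, wordDist_one_left, wordDist_one_left]
  omega

theorem finite_setOf_norm_le [Finite X] (K : ℕ) : {u : FreeGroup X | u.norm ≤ K}.Finite :=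
  (List.finite_length_le (X × Bool) K).preimage FreeGroup.toWord_injective.injOn

theorem exists_norm_map_le [Finite X] (θ : FreeGroup X →* FreeGroup X) :
    ∃ L : ℕ, ∀ g, (θ g).norm ≤ L * g.norm := by
  obtain ⟨L, hL⟩ := ((finite_setOf_norm_le (X := X) 1).image fun g ↦ (θ g).norm).bddAbove
  refine ⟨L, fun g ↦ ?_⟩
  induction hn : g.norm generalizing g with
  | zero => simp [FreeGroup.norm_eq_zero.1 hn]
  | succ n ih =>
    obtain ⟨t, ht, htn⟩ := exists_isBetween_one_of_le_norm (g := g) (j := n) (by omega)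
    have hlast : (t⁻¹ * g).norm ≤ 1 := by
      rw [IsBetween, wordDist_one_left, wordDist_one_left] at ht
      rw [← wordDist]
      omega
    calc (θ g).norm = (θ t * θ (t⁻¹ * g)).norm := by rw [← map_mul, mul_inv_cancel_left]
      _ ≤ (θ t).norm + (θ (t⁻¹ * g)).norm := FreeGroup.norm_mul_le _ _
      _ ≤ L * n + L := add_le_add (ih t htn) (hL ⟨_, hlast, rfl⟩)
      _ = L * (n + 1) := by ring

theorem exists_wordDist_map_le [Finite X] (θ : FreeGroup X →* FreeGroup X) :
    ∃ L : ℕ, ∀ a b, wordDist (θ a) (θ b) ≤ L * wordDist a b := by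
  obtain ⟨L, hL⟩ := exists_norm_map_le θ
  exact ⟨L, fun a b ↦ by simpa [wordDist] using hL (a⁻¹ * b)⟩

theorem exists_wordDist_map_le_of_isBetween_map [Finite X] (θ : FreeGroup X →* FreeGroup X) :
    ∃ L : ℕ, ∀ a b s, IsBetween (θ a) s (θ b) → ∃ t, IsBetween a t b ∧ wordDist (θ t) s ≤ L := by
  obtain ⟨L, hL⟩ := exists_wordDist_map_le θ
  refine ⟨L, fun a b s h ↦ ?_⟩
  have from_one (b s : FreeGroup X) (hs : IsBetween 1 s (θ b)) :
      ∃ t, IsBetween 1 t b ∧ wordDist (θ t) s ≤ L := by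
    induction hn : b.norm generalizing b s with
    | zero =>
      obtain rfl : b = 1 := FreeGroup.norm_eq_zero.1 hn
      refine ⟨1, .left _ _, ?_⟩
      rw [IsBetween, map_one, wordDist_self] at hs
      rw [map_one]
      omega
    | succ n ih =>
      obtain ⟨t, ht, htn⟩ := exists_isBetween_one_of_le_norm (g := b) (j := n) (by omega)
      obtain h | h := hs.split (θ t)
      · obtain ⟨t', ht', hl⟩ := ih t s h htn
        exact ⟨t', ht'.trans_right ht, hl⟩
      · refine ⟨t, ht, ?_⟩
        rw [IsBetween, wordDist_one_left, wordDist_one_left] at ht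
        have last := hL t b
        rw [show wordDist t b = 1 by omega] at last
        unfold IsBetween at h
        omega
  obtain ⟨t, ht, hl⟩ := from_one (a⁻¹ * b) ((θ a)⁻¹ * s)
    (by simpa using (IsBetween.mul_left_iff (θ a)⁻¹).2 h)
  refine ⟨a * t, by simpa using (IsBetween.mul_left_iff a).2 ht, ?_⟩
  rw [← wordDist_mul_left (θ a)] at hl
  simpa using hl

-- Thurston–Cooper bounded cancellation.
theorem exists_isBetween_map_wordDist_le [Finite X] (θ : FreeGroup X ≃* FreeGroup X) :
    ∃ L : ℕ, ∀ a t b, IsBetween a t b → ∃ s, IsBetween (θ a) s (θ b) ∧ wordDist s (θ t) ≤ L := by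
  obtain ⟨L, hL⟩ := exists_wordDist_map_le_of_isBetween_map θ.symm.toMonoidHom
  obtain ⟨L', hL'⟩ := exists_wordDist_map_le θ.toMonoidHom
  refine ⟨L' * L, fun a t b h ↦ ?_⟩
  obtain ⟨s, hs, hl⟩ := hL (θ a) (θ b) t (by simpa using h)
  have := hL' (θ.symm.toMonoidHom s) t
  exact ⟨s, hs, by simpa using this.trans (Nat.mul_le_mul_left _ hl)⟩

end CayleyTree

theorem apply_eq_of_mem_zpowers {G : Type*} [Group G] {ψ θ : MulAut G}
    (hθ : θ ∈ Subgroup.zpowers ψ) {g : G} (hg : ψ g = g) : θ g = g :=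
  Subgroup.zpowers_le.2 (show ψ ∈ MulAction.stabilizer (MulAut G) g from hg) hθ

section OrbitDist

variable {X : Type*} [DecidableEq X] {ψ : MulAut (FreeGroup X)} {n : ℕ}

/-- The word metric summed over the first `n` iterates of `ψ`; when `ψ ^ n = 1` it is a
`ψ`-invariant metric quasi-isometric to the word metric. -/
def orbitDist (ψ : MulAut (FreeGroup X)) (n : ℕ) (a b : FreeGroup X) : ℕ :=
  ∑ i ∈ Finset.range n, wordDist ((ψ ^ i) a) ((ψ ^ i) b)

theorem orbitDist_comm (a b : FreeGroup X) : orbitDist ψ n a b = orbitDist ψ n b a :=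
  Finset.sum_congr rfl fun _ _ ↦ wordDist_comm _ _

theorem orbitDist_triangle (a t b : FreeGroup X) :
    orbitDist ψ n a b ≤ orbitDist ψ n a t + orbitDist ψ n t b :=
  (Finset.sum_le_sum fun _ _ ↦ wordDist_triangle _ _ _).trans_eq Finset.sum_add_distrib

@[simp]
theorem orbitDist_mul_left (g a b : FreeGroup X) :
    orbitDist ψ n (g * a) (g * b) = orbitDist ψ n a b := by
  simp [orbitDist]

theorem orbitDist_map (hψ : ψ ^ n = 1) (a b : FreeGroup X) :
    orbitDist ψ n (ψ a) (ψ b) = orbitDist ψ n a b := by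
  have shift := (Finset.sum_range_succ' (fun i ↦ wordDist ((ψ ^ i) a) ((ψ ^ i) b)) n).symm.trans
    (Finset.sum_range_succ _ n)
  rw [hψ, pow_zero, add_left_inj] at shift
  exact shift

theorem orbitDist_map_of_mem_zpowers (hn : 0 < n) (hψ : ψ ^ n = 1) {θ : MulAut (FreeGroup X)}
    (hθ : θ ∈ Subgroup.zpowers ψ) (a b : FreeGroup X) :
    orbitDist ψ n (θ a) (θ b) = orbitDist ψ n a b := by
  have fin : IsOfFinOrder ψ := isOfFinOrder_iff_pow_eq_one.2 ⟨n, hn, hψ⟩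
  obtain ⟨i, rfl : ψ ^ i = θ⟩ := fin.mem_powers_iff_mem_zpowers.2 hθ
  clear hθ
  induction i with
  | zero => rfl
  | succ i ih => rw [pow_succ', MulAut.mul_apply, MulAut.mul_apply, orbitDist_map hψ, ih]

theorem wordDist_le_orbitDist (hn : 0 < n) (a b : FreeGroup X) :
    wordDist a b ≤ orbitDist ψ n a b :=
  Finset.single_le_sum (f := fun i ↦ wordDist ((ψ ^ i) a) ((ψ ^ i) b))
    (fun _ _ ↦ Nat.zero_le _) (Finset.mem_range.2 hn)

variable [Finite X]

theorem exists_orbitDist_le (ψ : MulAut (FreeGroup X)) (n : ℕ) :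
    ∃ L, ∀ a b, orbitDist ψ n a b ≤ L * wordDist a b := by
  choose L hL using fun i : ℕ ↦ exists_wordDist_map_le (ψ ^ i).toMonoidHom
  refine ⟨∑ i ∈ Finset.range n, L i, fun a b ↦ ?_⟩
  rw [Finset.sum_mul]
  exact Finset.sum_le_sum fun i _ ↦ hL i a b

theorem finite_setOf_orbitDist_one_le (hn : 0 < n) (K : ℕ) :
    {u : FreeGroup X | orbitDist ψ n 1 u ≤ K}.Finite :=
  (finite_setOf_norm_le K).subset fun u (hu : orbitDist ψ n 1 u ≤ K) ↦
    (wordDist_one_left u).symm.trans_le ((wordDist_le_orbitDist hn 1 u).trans hu)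

theorem exists_orbitDist_add_le_of_isBetween (ψ : MulAut (FreeGroup X)) (n : ℕ) :
    ∃ c, ∀ a t b, IsBetween a t b →
      orbitDist ψ n a t + orbitDist ψ n t b ≤ orbitDist ψ n a b + c := by
  choose L hL using fun i : ℕ ↦ exists_isBetween_map_wordDist_le (ψ ^ i)
  refine ⟨∑ i ∈ Finset.range n, 2 * L i, fun a t b h ↦ ?_⟩
  simp only [orbitDist, ← Finset.sum_add_distrib]
  refine Finset.sum_le_sum fun i _ ↦ ?_
  obtain ⟨s, hs, hl⟩ := hL i a t b h
  have := wordDist_triangle ((ψ ^ i) a) s ((ψ ^ i) t)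
  have := wordDist_triangle ((ψ ^ i) t) s ((ψ ^ i) b)
  have := wordDist_comm s ((ψ ^ i) t)
  unfold IsBetween at hs
  omega

-- A point `s` of `[1, h]` near `ψ t` is at roughly the same distance from `1` as `t`.
theorem exists_orbitDist_map_le_of_isBetween (hψ : ψ ^ n = 1) :
    ∃ M, ∀ h, ψ h = h → ∀ t, IsBetween 1 t h → orbitDist ψ n t (ψ t) ≤ M := by
  obtain ⟨L, hL⟩ := exists_isBetween_map_wordDist_le ψ
  obtain ⟨L', hL'⟩ := exists_orbitDist_le ψ n
  obtain ⟨c, hc⟩ := exists_orbitDist_add_le_of_isBetween ψ n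
  refine ⟨c + 2 * (L' * L), fun h hh t ht ↦ ?_⟩
  obtain ⟨s, hs, hst⟩ := hL 1 t h ht
  rw [map_one, hh] at hs
  have near : orbitDist ψ n s (ψ t) ≤ L' * L := (hL' _ _).trans (Nat.mul_le_mul_left _ hst)
  have same_height : orbitDist ψ n 1 (ψ t) = orbitDist ψ n 1 t := by
    simpa using orbitDist_map hψ 1 t
  have := orbitDist_triangle (ψ := ψ) (n := n) 1 s (ψ t)
  have := orbitDist_triangle (ψ := ψ) (n := n) 1 (ψ t) s
  have := orbitDist_comm (ψ := ψ) (n := n) s (ψ t)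
  have := orbitDist_comm (ψ := ψ) (n := n) t s
  have := orbitDist_triangle (ψ := ψ) (n := n) t s (ψ t)
  obtain hts | hts := ht.split s
  · have := hc _ _ _ hts
    omega
  · have := hc _ _ _ (hs.between_left_of_between_right hts)
    omega

-- The `t` with a given value of `t⁻¹ * ψ t` form a single coset of the fixed subgroup.
theorem exists_orbitDist_fixed_le_of_orbitDist_map_le (ψ : MulAut (FreeGroup X)) (hn : 0 < n)
    (M : ℕ) : ∃ K, ∀ t, orbitDist ψ n t (ψ t) ≤ M → ∃ h, ψ h = h ∧ orbitDist ψ n h t ≤ K := by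
  have exists_coset_bound (u : FreeGroup X) :
      ∃ K, ∀ t, ψ t = t * u → ∃ h, ψ h = h ∧ orbitDist ψ n h t ≤ K := by
    by_cases hu : ∃ t₀, ψ t₀ = t₀ * u
    · obtain ⟨t₀, ht₀⟩ := hu
      refine ⟨orbitDist ψ n 1 t₀, fun t ht ↦ ⟨t * t₀⁻¹, by simp [ht, ht₀], le_of_eq ?_⟩⟩
      simpa using orbitDist_mul_left (t * t₀⁻¹) 1 t₀
    · exact ⟨0, fun t ht ↦ (hu ⟨t, ht⟩).elim⟩
  choose K hK using exists_coset_bound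
  obtain ⟨K', hK'⟩ := ((finite_setOf_orbitDist_one_le (ψ := ψ) hn M).image K).bddAbove
  refine ⟨K', fun t ht ↦ ?_⟩
  obtain ⟨h, hh, hle⟩ := hK (t⁻¹ * ψ t) t (mul_inv_cancel_left _ _).symm
  refine ⟨h, hh, hle.trans (hK' ⟨_, ?_, rfl⟩)⟩
  simpa using (orbitDist_mul_left t⁻¹ t (ψ t)).trans_le ht

theorem exists_orbitDist_fixed_le_of_isBetween (hn : 0 < n) (hψ : ψ ^ n = 1) :
    ∃ K, ∀ h, ψ h = h → ∀ t, IsBetween 1 t h → ∃ h₁, ψ h₁ = h₁ ∧ orbitDist ψ n h₁ t ≤ K := by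
  obtain ⟨M, hM⟩ := exists_orbitDist_map_le_of_isBetween hψ
  obtain ⟨K, hK⟩ := exists_orbitDist_fixed_le_of_orbitDist_map_le ψ hn M
  exact ⟨K, fun h hh t ht ↦ hK t (hM h hh t ht)⟩

end OrbitDist

section SameEnd

variable {X : Type*} [DecidableEq X] {ψ : MulAut (FreeGroup X)} {n R : ℕ}

/-- `a` and `b` lie in the same component of the complement of the `R`-neighbourhood of the fixed
subgroup, even after applying any power of `ψ`; each other point is equivalent only to itself. -/
def SameEnd (ψ : MulAut (FreeGroup X)) (n R : ℕ) (a b : FreeGroup X) : Prop :=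
  a = b ∨ ∀ θ ∈ Subgroup.zpowers ψ, ∀ t, IsBetween (θ a) t (θ b) →
    ∀ h, ψ h = h → R < orbitDist ψ n h t

namespace SameEnd

variable {a b c : FreeGroup X}

theorem symm (hab : SameEnd ψ n R a b) : SameEnd ψ n R b a :=
  hab.imp Eq.symm fun far θ hθ t ht ↦ far θ hθ t ht.symm

theorem trans (hab : SameEnd ψ n R a b) (hbc : SameEnd ψ n R b c) : SameEnd ψ n R a c := by
  obtain rfl | far_ab := hab
  · exact hbc
  obtain rfl | far_bc := hbc
  · exact .inr far_ab
  · exact .inr fun θ hθ t ht ↦ (ht.split (θ b)).elim (far_ab θ hθ t) (far_bc θ hθ t)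

theorem mul_left {h : FreeGroup X} (hh : ψ h = h) (hab : SameEnd ψ n R a b) :
    SameEnd ψ n R (h * a) (h * b) := by
  refine hab.imp (congrArg (h * ·)) fun far θ hθ t ht h₁ hh₁ ↦ ?_
  rw [map_mul, map_mul, apply_eq_of_mem_zpowers hθ hh] at ht
  have := far θ hθ (h⁻¹ * t) (by simpa using (IsBetween.mul_left_iff h⁻¹).2 ht) (h⁻¹ * h₁)
    (by simp [hh, hh₁])
  simpa using this

theorem map {θ : MulAut (FreeGroup X)} (hθ : θ ∈ Subgroup.zpowers ψ) (hab : SameEnd ψ n R a b) :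
    SameEnd ψ n R (θ a) (θ b) :=
  hab.imp (congrArg θ) fun far θ' hθ' t ht ↦ far (θ' * θ) (mul_mem hθ' hθ) t ht

theorem equivalence (ψ : MulAut (FreeGroup X)) (n R : ℕ) : Equivalence (SameEnd ψ n R) :=
  ⟨fun _ ↦ .inl rfl, symm, trans⟩

end SameEnd

theorem exists_isBetween_mul_right {g k : FreeGroup X} (hk : 2 * g.norm < k.norm) :
    ∃ t, IsBetween 1 t k ∧ IsBetween g t (k * g) := by
  obtain ⟨t, ht, htg⟩ := exists_isBetween_one_of_le_norm (g := k) (j := g.norm) (by omega)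
  refine ⟨t, ht, ?_⟩
  have far_from_k : wordDist (k * g) k < wordDist t k := by
    have : wordDist (k * g) k = g.norm := by
      simpa [wordDist_comm g] using wordDist_mul_left k g 1
    rw [IsBetween, wordDist_one_left, wordDist_one_left] at ht
    omega
  obtain h | h := ht.split g
  · rw [IsBetween, wordDist_one_left, wordDist_one_left, htg] at h
    obtain rfl : t = g := eq_of_wordDist_eq_zero (by omega)
    exact .left _ _
  · refine (h.split (k * g)).resolve_right fun h' ↦ ?_
    unfold IsBetween at h'
    omega

variable [Finite X]

theorem exists_lt_norm_pow {h : FreeGroup X} (hh : h ≠ 1) (K : ℕ) : ∃ N, K < (h ^ N).norm := by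
  have inj : Function.Injective fun N : ℕ ↦ h ^ N :=
    injective_pow_iff_not_isOfFinOrder.2 (not_isOfFinOrder_of_isMulTorsionFree hh)
  obtain ⟨_, ⟨N, rfl⟩, hN⟩ := (Set.infinite_range_of_injective inj).exists_notMem_finite
    (finite_setOf_norm_le K)
  exact ⟨N, not_le.1 hN⟩

theorem exists_forall_sameEnd_mul_left (hn : 0 < n) (hψ : ψ ^ n = 1) :
    ∃ R, ∀ h, ψ h = h → ∀ g, SameEnd ψ n R (h * g) g → h = 1 := by
  obtain ⟨R, hR⟩ := exists_orbitDist_fixed_le_of_isBetween hn hψ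
  refine ⟨R, fun h hh g hg ↦ by_contra fun hne ↦ ?_⟩
  obtain ⟨N, hN⟩ := exists_lt_norm_pow hne (2 * g.norm)
  have same_end_pow (i : ℕ) : SameEnd ψ n R g (h ^ i * g) := by
    induction i with
    | zero => exact .inl (one_mul g).symm
    | succ i ih => exact hg.symm.trans (by simpa [pow_succ', mul_assoc] using ih.mul_left hh)
  obtain heq | far := same_end_pow N
  · simp [(mul_eq_right.1 heq.symm : h ^ N = 1)] at hN
  · obtain ⟨t, ht, ht'⟩ := exists_isBetween_mul_right hN
    obtain ⟨h₁, hh₁, hle⟩ := hR (h ^ N) (by simp [hh]) t ht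
    exact (far 1 (one_mem _) t ht' h₁ hh₁).not_ge hle

theorem exists_forall_sameEnd_mul_map (hn : 0 < n) (hψ : ψ ^ n = 1) :
    ∃ R, ∀ h, ψ h = h → ∀ θ ∈ Subgroup.zpowers ψ, ∀ g, SameEnd ψ n R (h * θ g) g → h = 1 := by
  obtain ⟨R, hR⟩ := exists_forall_sameEnd_mul_left hn hψ
  refine ⟨R, fun h hh θ hθ g hg ↦ ?_⟩
  have iterate (i : ℕ) : SameEnd ψ n R (h ^ i * (θ ^ i) g) g := by
    induction i with
    | zero => exact .inl (one_mul g)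
    | succ i ih =>
      have := (ih.map hθ).mul_left hh
      rw [map_mul, apply_eq_of_mem_zpowers hθ (by simp [hh]), ← MulAut.mul_apply, ← pow_succ',
        ← mul_assoc, ← pow_succ'] at this
      exact this.trans hg
  have θ_pow : θ ^ n = 1 := by
    obtain ⟨k, rfl⟩ := hθ
    rw [← zpow_natCast, zpow_comm, zpow_natCast, hψ, one_zpow]
  have pow_eq_one : h ^ n = 1 :=
    hR (h ^ n) (by simp [hh]) g (by simpa only [θ_pow, MulAut.one_apply] using iterate n)
  exact (pow_eq_one_iff_left hn.ne').1 pow_eq_one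

end SameEnd

theorem exists_map_smul_eq_mul {A Z M : Type*} [Group A] [MulAction A Z] [Group M] (S : Setoid Z)
    (hS : ∀ (a : A) z w, S z w → S (a • z) (a • w)) (χ : A →* M)
    (hχ : ∀ a z, S (a • z) z → χ a = 1) :
    ∃ f : Z → M, (∀ a z, f (a • z) = χ a * f z) ∧ ∀ z w, S z w → f z = f w := by
  let T : Setoid Z :=
    { r := fun z w ↦ ∃ a : A, S (a • z) w
      iseqv :=
        { refl := fun z ↦ ⟨1, by rw [one_smul]⟩
          symm := fun {z w} ⟨a, ha⟩ ↦ ⟨a⁻¹, S.symm (by simpa using hS a⁻¹ _ _ ha)⟩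
          trans := fun {z w v} ⟨a, ha⟩ ⟨b, hb⟩ ↦
            ⟨b * a, S.trans (mul_smul b a z ▸ hS b _ _ ha) hb⟩ } }
  let rep (z : Z) : Z := Quotient.out (Quotient.mk T z)
  choose a ha using fun z : Z ↦ (Quotient.mk_out (s := T) z : T (rep z) z)
  have rep_eq {z w} (h : T z w) : rep z = rep w := congrArg Quotient.out (Quotient.sound h)
  have unique {z b} (hb : S (b • rep z) z) : χ b = χ (a z) := by
    have := hS (a z)⁻¹ _ _ (S.trans hb (S.symm (ha z)))
    rw [inv_smul_smul, smul_smul] at this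
    exact (inv_mul_eq_one.1 (by rw [← map_inv, ← map_mul, hχ _ _ this])).symm
  refine ⟨fun z ↦ χ (a z), fun c z ↦ ?_, fun z w h ↦ unique ?_⟩
  · rw [← map_mul]
    refine (unique ?_).symm
    rw [← rep_eq ⟨c, S.refl (c • z)⟩, mul_smul]
    exact hS c _ _ (ha z)
  · have rep_zw : rep z = rep w := rep_eq ⟨1, by rwa [one_smul]⟩
    exact S.trans (rep_zw ▸ ha z) h

section AlmostInvariant

variable {X : Type*} [DecidableEq X] [Finite X] {ψ : MulAut (FreeGroup X)} {n : ℕ}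

theorem exists_sameEnd_mul_right (hn : 0 < n) (hψ : ψ ^ n = 1) (R : ℕ) (u : FreeGroup X) :
    ∃ R', ∀ g, (∀ h, ψ h = h → R' < orbitDist ψ n h g) → SameEnd ψ n R (g * u) g := by
  obtain ⟨c, hc⟩ := exists_orbitDist_add_le_of_isBetween ψ n
  refine ⟨R + orbitDist ψ n 1 u + c, fun g hg ↦ .symm (.inr fun θ hθ t ht h hh ↦ ?_)⟩
  have h_far : orbitDist ψ n h (θ g) = orbitDist ψ n h g := by
    conv_lhs => rw [← apply_eq_of_mem_zpowers hθ hh, orbitDist_map_of_mem_zpowers hn hψ hθ]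
  have edge : orbitDist ψ n (θ g) (θ (g * u)) = orbitDist ψ n 1 u := by
    rw [orbitDist_map_of_mem_zpowers hn hψ hθ]
    simpa using orbitDist_mul_left g 1 u
  have := hg h hh
  have := hc _ _ _ ht
  have := orbitDist_triangle (ψ := ψ) (n := n) h t (θ g)
  have := orbitDist_comm (ψ := ψ) (n := n) t (θ g)
  omega

theorem exists_almost_right_invariant (hn : 0 < n) (hψ : ψ ^ n = 1) {M : Type*} [Group M]
    (χ : fixedSubgroup ψ.toMonoidHom →* M) :
    ∃ f : FreeGroup X → M, (∀ (h : fixedSubgroup ψ.toMonoidHom) g, f (h * g) = χ h * f g) ∧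
      (∀ g, f (ψ g) = f g) ∧
      ∀ u, ∃ R, ∀ g, f (g * u) ≠ f g → ∃ h, ψ h = h ∧ orbitDist ψ n h g ≤ R := by
  obtain ⟨R, hR⟩ := exists_forall_sameEnd_mul_map hn hψ
  let A := fixedSubgroup ψ.toMonoidHom × Subgroup.zpowers ψ
  have : SMulCommClass (fixedSubgroup ψ.toMonoidHom) (Subgroup.zpowers ψ) (FreeGroup X) :=
    ⟨fun h θ g ↦ by
      change h.1 * θ.1 g = θ.1 (h.1 * g)
      rw [map_mul, apply_eq_of_mem_zpowers θ.2 h.2]⟩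
  let : MulAction A (FreeGroup X) := MulAction.prodOfSMulCommClass _ _ _
  let S : Setoid (FreeGroup X) := ⟨SameEnd ψ n R, SameEnd.equivalence ψ n R⟩
  have hS (a : A) (z w) (h : S z w) : S (a • z) (a • w) := (h.map a.2.2).mul_left a.1.2
  have stabilizer_le_ker (a : A) (z) (h : S (a • z) z) : χ.comp (MonoidHom.fst _ _) a = 1 :=
    (congrArg χ (Subtype.ext (hR a.1 a.1.2 a.2 a.2.2 z h))).trans χ.map_one
  obtain ⟨f, hf, hfS⟩ := exists_map_smul_eq_mul S hS _ stabilizer_le_ker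
  refine ⟨f, fun h g ↦ hf (h, 1) g, fun g ↦ ?_, fun u ↦ ?_⟩
  · have hψg : ((1, ⟨ψ, Subgroup.mem_zpowers ψ⟩) : A) • g = ψ g := one_mul _
    rw [← hψg, hf, MonoidHom.comp_apply, MonoidHom.coe_fst, map_one, one_mul]
  · obtain ⟨R', hR'⟩ := exists_sameEnd_mul_right hn hψ R u
    refine ⟨R', fun g hg ↦ ?_⟩
    by_contra! hfar
    exact hg (hfS _ _ (hR' g hfar))

end AlmostInvariant

section ExtendHom

variable {G M : Type*} [Group G] [CommGroup M]

section CosetRatio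

variable {H : Subgroup G} {χ : H →* M} {f : G → M}

/-- For `f` equivariant under left multiplication by `H`, the ratio `f (g * u) / f g` depends only
on the right coset of `g`. Cosets are indexed by `G ⧸ H` through inversion. -/
def cosetRatio (hf : ∀ (h : H) g, f (h * g) = χ h * f g) (u : G) : G ⧸ H → M :=
  Quotient.lift (fun g ↦ f (g⁻¹ * u) / f g⁻¹) fun a b hab ↦ by
    have hab : a⁻¹ * b ∈ H := QuotientGroup.leftRel_apply.1 hab
    have ratio_eq (w : G) : f (a⁻¹ * w) = χ ⟨a⁻¹ * b, hab⟩ * f (b⁻¹ * w) := by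
      rw [← hf, mul_assoc, mul_inv_cancel_left]
    have hu := ratio_eq u
    have h1 := ratio_eq 1
    rw [mul_one, mul_one] at h1
    rw [hu, h1, mul_div_mul_left_eq_div]

variable (hf : ∀ (h : H) g, f (h * g) = χ h * f g)

theorem cosetRatio_mk (u g : G) : cosetRatio hf u (g : G ⧸ H) = f (g⁻¹ * u) / f g⁻¹ := rfl

theorem cosetRatio_mul (u v : G) (q : G ⧸ H) :
    cosetRatio hf (u * v) q = cosetRatio hf u q * cosetRatio hf v (u⁻¹ • q) := by
  induction q using QuotientGroup.induction_on with
  | H g =>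
    change f (g⁻¹ * (u * v)) / f g⁻¹ =
      f (g⁻¹ * u) / f g⁻¹ * (f ((u⁻¹ * g)⁻¹ * v) / f (u⁻¹ * g)⁻¹)
    simp [mul_assoc]

/-- The homomorphism `u ↦ ∏ f (g * u) / f g`, over the right cosets `H g`. -/
noncomputable def cosetRatioHom (hfin : ∀ u, (cosetRatio hf u).mulSupport.Finite) : G →* M :=
  MonoidHom.mk' (fun u ↦ ∏ᶠ q, cosetRatio hf u q) fun u v ↦ by
    have translate : ∏ᶠ q, cosetRatio hf v (u⁻¹ • q) = ∏ᶠ q, cosetRatio hf v q :=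
      finprod_comp _ (MulAction.bijective u⁻¹)
    have hfin' : (Function.mulSupport fun q ↦ cosetRatio hf v (u⁻¹ • q)).Finite :=
      (hfin v).preimage (MulAction.injective u⁻¹).injOn
    simp_rw [cosetRatio_mul hf u v]
    rw [finprod_mul_distrib (hfin u) hfin', translate]

end CosetRatio

theorem prod_eq_one_of_perm_pow_prime_eq_one {Q : Type*} {p : ℕ} [Fact p.Prime]
    (hM : ∀ m : M, m ^ p = 1) {σ : Equiv.Perm Q} (hσ : σ ^ p = 1) {F : Q → M}
    (hF : ∀ q, F (σ q) = F q) {s : Finset Q} (hs : ∀ q, σ q ∈ s ↔ q ∈ s)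
    (hfix : ∀ q ∈ s, σ q ≠ q) : ∏ q ∈ s, F q = 1 := by
  classical
  have fiber_card (b : M) : p ∣ (s.filter fun q ↦ F q = b).card := by
    let τ : Equiv.Perm (s.filter fun q ↦ F q = b) :=
      σ.subtypePerm fun q ↦ by rw [Finset.mem_filter, Finset.mem_filter, hF, hs]
    have hτ : τ ^ p ^ 1 = 1 := by
      rw [pow_one, Equiv.Perm.subtypePerm_pow]
      simp only [hσ]
      rfl
    have no_fixed_point : τ.supportᶜ = ∅ := by
      refine Finset.eq_empty_of_forall_notMem fun q hq ↦ ?_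
      exact hfix q (Finset.mem_filter.1 q.2).1 (congrArg Subtype.val (by simpa using hq))
    have := Equiv.Perm.card_compl_support_modEq hτ
    rw [no_fixed_point, Finset.card_empty, Fintype.card_coe] at this
    exact (Nat.modEq_zero_iff_dvd.1 this.symm)
  rw [Finset.prod_comp (fun b : M ↦ b) F]
  refine Finset.prod_eq_one fun b _ ↦ ?_
  obtain ⟨k, hk⟩ := fiber_card b
  rw [hk, pow_mul, hM, one_pow]

theorem finprod_eq_of_perm_pow_prime_eq_one {Q : Type*} {p : ℕ} [Fact p.Prime]
    (hM : ∀ m : M, m ^ p = 1) {σ : Equiv.Perm Q} (hσ : σ ^ p = 1) {F : Q → M}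
    (hF : ∀ q, F (σ q) = F q) (hfin : F.mulSupport.Finite) {q₀ : Q}
    (hfix : ∀ q, σ q = q ↔ q = q₀) : ∏ᶠ q, F q = F q₀ := by
  classical
  rw [finprod_eq_prod_of_mulSupport_subset F (s := insert q₀ hfin.toFinset) (by simp),
    ← Finset.mul_prod_erase _ _ (Finset.mem_insert_self _ _), mul_eq_left]
  have hσq₀ : σ q₀ = q₀ := (hfix q₀).2 rfl
  refine prod_eq_one_of_perm_pow_prime_eq_one hM hσ hF (fun q ↦ ?_) fun q hq h ↦ ?_
  · have : σ q = q₀ ↔ q = q₀ := by rw [← σ.injective.eq_iff (a := q) (b := q₀), hσq₀]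
    simp [hF, this]
  · exact Finset.ne_of_mem_erase hq ((hfix q).1 h)

theorem apply_eq_of_apply_inv_mul_apply_eq [IsMulTorsionFree G] {ψ : MulAut G} {n : ℕ}
    (hn : n ≠ 0) (hψ : ψ ^ n = 1) {g : G} (h : ψ (g⁻¹ * ψ g) = g⁻¹ * ψ g) : ψ g = g := by
  have iterate (i : ℕ) : (ψ ^ i) g = g * (g⁻¹ * ψ g) ^ i := by
    induction i with
    | zero => simp
    | succ i ih =>
      rw [pow_succ', MulAut.mul_apply, ih, map_mul, map_pow, h, pow_succ', ← mul_assoc g,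
        mul_inv_cancel_left]
  have := iterate n
  rw [hψ, MulAut.one_apply, left_eq_mul, pow_eq_one_iff_left hn, inv_mul_eq_one] at this
  exact this.symm

/-- The permutation of the cosets of the fixed subgroup induced by the automorphism. -/
def fixedCosetPerm (ψ : MulAut G) : Equiv.Perm (G ⧸ fixedSubgroup ψ.toMonoidHom) :=
  Quotient.congr ψ.toEquiv fun a b ↦ by
    change QuotientGroup.leftRel _ a b ↔ QuotientGroup.leftRel _ (ψ a) (ψ b)
    rw [QuotientGroup.leftRel_apply, QuotientGroup.leftRel_apply, ← map_inv, ← map_mul]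
    exact ψ.injective.eq_iff.symm

theorem fixedCosetPerm_mk (ψ : MulAut G) (g : G) :
    fixedCosetPerm ψ (g : G ⧸ fixedSubgroup ψ.toMonoidHom) = (ψ g : G) := rfl

theorem fixedCosetPerm_pow_eq_one {ψ : MulAut G} {n : ℕ} (hψ : ψ ^ n = 1) :
    fixedCosetPerm ψ ^ n = 1 := by
  have pow_mk (i : ℕ) (g : G) : (fixedCosetPerm ψ ^ i) (g : G ⧸ fixedSubgroup ψ.toMonoidHom) =
      ((ψ ^ i) g : G) := by
    induction i with
    | zero => rfl
    | succ i ih => rw [pow_succ', pow_succ', Equiv.Perm.mul_apply, ih, fixedCosetPerm_mk,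
        MulAut.mul_apply]
  ext q
  induction q using QuotientGroup.induction_on with
  | H g => rw [pow_mk, hψ, MulAut.one_apply, Equiv.Perm.one_apply]

theorem fixedCosetPerm_apply_eq_iff [IsMulTorsionFree G] {ψ : MulAut G} {n : ℕ} (hn : n ≠ 0)
    (hψ : ψ ^ n = 1) (q : G ⧸ fixedSubgroup ψ.toMonoidHom) :
    fixedCosetPerm ψ q = q ↔ q = (1 : G) := by
  induction q using QuotientGroup.induction_on with
  | H g =>
    rw [fixedCosetPerm_mk, eq_comm, QuotientGroup.eq, eq_comm, QuotientGroup.eq, inv_one, one_mul]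
    refine ⟨apply_eq_of_apply_inv_mul_apply_eq hn hψ, fun hg ↦ ?_⟩
    rw [show ψ g = g from hg, inv_mul_cancel]
    exact one_mem _

theorem exists_extension_of_pow_prime_eq_one {X : Type*} [Finite X] {p : ℕ} [Fact p.Prime]
    {ψ : MulAut (FreeGroup X)} (hψ : ψ ^ p = 1) (hM : ∀ m : M, m ^ p = 1)
    (χ : fixedSubgroup ψ.toMonoidHom →* M) :
    ∃ χ' : FreeGroup X →* M, χ'.comp (fixedSubgroup ψ.toMonoidHom).subtype = χ := by
  classical
  have hp : 0 < p := Nat.Prime.pos Fact.out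
  obtain ⟨f, hf, hfψ, hfin⟩ := exists_almost_right_invariant hp hψ χ
  have finite_support (u : FreeGroup X) : (cosetRatio hf u).mulSupport.Finite := by
    obtain ⟨R, hR⟩ := hfin u
    refine ((finite_setOf_orbitDist_one_le (ψ := ψ) hp R).image fun v ↦ (v⁻¹ : FreeGroup X)).image
      QuotientGroup.mk |>.subset fun q hq ↦ ?_
    induction q using QuotientGroup.induction_on with
    | H g =>
      obtain ⟨h, hh, hle⟩ := hR g⁻¹ (div_ne_one.1 hq)
      refine ⟨_, ⟨h⁻¹ * g⁻¹, ?_, rfl⟩, QuotientGroup.eq.2 ?_⟩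
      · simpa using (orbitDist_mul_left h⁻¹ h g⁻¹).trans_le hle
      · simpa using inv_mem (show h ∈ fixedSubgroup ψ.toMonoidHom from hh)
  refine ⟨cosetRatioHom hf finite_support, MonoidHom.ext fun h ↦ ?_⟩
  have invariant (q) : cosetRatio hf h (fixedCosetPerm ψ q) = cosetRatio hf h q := by
    induction q using QuotientGroup.induction_on with
    | H g =>
      have hh : ψ h = h := h.2
      rw [fixedCosetPerm_mk, cosetRatio_mk, cosetRatio_mk, ← hfψ (g⁻¹ * h), ← hfψ g⁻¹, map_mul,
        hh, map_inv]
  calc cosetRatioHom hf finite_support h = cosetRatio hf h (1 : FreeGroup X) :=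
        finprod_eq_of_perm_pow_prime_eq_one hM (fixedCosetPerm_pow_eq_one hψ) invariant
          (finite_support h) (fixedCosetPerm_apply_eq_iff hp.ne' hψ)
    _ = χ h := by rw [cosetRatio_mk, inv_one, one_mul, ← mul_one (h : FreeGroup X), hf,
        mul_div_cancel_right]

end ExtendHom

section Rank

variable {G G' : Type*} [Group G] [Group G'] {r : ℕ}

/-- `G` is a free group of rank at most `r`. -/
def IsFreeOfRankLE (G : Type*) [Group G] (r : ℕ) : Prop :=
  ∃ s ≤ r, Nonempty (FreeGroupBasis (Fin s) G)

theorem IsFreeOfRankLE.of_mulEquiv (h : IsFreeOfRankLE G r) (e : G ≃* G') :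
    IsFreeOfRankLE G' r :=
  let ⟨s, hs, ⟨b⟩⟩ := h
  ⟨s, hs, ⟨b.map e⟩⟩

theorem IsFreeOfRankLE.of_forall_finset_card_le {ι : Type*} (b : FreeGroupBasis ι G)
    (h : ∀ s : Finset ι, s.card ≤ r) : IsFreeOfRankLE G r := by
  have : Finite ι := by
    by_contra hι
    have := not_finite_iff_infinite.1 hι
    obtain ⟨s, hs⟩ := Infinite.exists_subset_card_eq ι (r + 1)
    have := h s
    omega
  obtain ⟨s, ⟨e⟩⟩ := Finite.exists_equiv_fin ι
  refine ⟨s, ?_, ⟨b.reindex e⟩⟩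
  simpa using h (Finset.univ.map e.symm.toEmbedding)

theorem card_le_of_forall_exists_extension {X ι M : Type*} [Finite X] [Group M] [Finite M]
    [Nontrivial M] {K : Subgroup (FreeGroup X)} (b : FreeGroupBasis ι K)
    (hK : ∀ χ : K →* M, ∃ χ' : FreeGroup X →* M, χ'.comp K.subtype = χ) (s : Finset ι) :
    s.card ≤ Nat.card X := by
  classical
  let restrict (c : X → M) (i : s) : M := FreeGroup.lift c (b i : FreeGroup X)
  have surj : Function.Surjective restrict := fun d ↦ by
    obtain ⟨χ, hχ⟩ := hK (b.lift fun i ↦ if hi : i ∈ s then d ⟨i, hi⟩ else 1)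
    refine ⟨fun x ↦ χ (FreeGroup.of x), funext fun i ↦ ?_⟩
    have lift_eq : FreeGroup.lift (fun x ↦ χ (FreeGroup.of x)) = χ := by ext; simp
    have := DFunLike.congr_fun hχ (b i)
    simpa [restrict, lift_eq] using this
  have := Nat.card_le_card_of_surjective restrict surj
  rw [Nat.card_fun, Nat.card_fun, Nat.card_eq_fintype_card (α := s), Fintype.card_coe] at this
  exact (Nat.pow_le_pow_iff_right Finite.one_lt_card).1 this

theorem isFreeOfRankLE_fixedSubgroup_freeGroup {X : Type*} [Finite X] {p : ℕ} [Fact p.Prime]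
    {ψ : MulAut (FreeGroup X)} (hψ : ψ ^ p = 1) :
    IsFreeOfRankLE (fixedSubgroup ψ.toMonoidHom) (Nat.card X) :=
  .of_forall_finset_card_le (IsFreeGroup.basis _) <|
    card_le_of_forall_exists_extension (M := Multiplicative (ZMod p)) (IsFreeGroup.basis _) <|
      exists_extension_of_pow_prime_eq_one hψ fun m ↦
        Multiplicative.toAdd.injective (by simp)

theorem fixedSubgroup_congr (e : G ≃* G') (ψ : MulAut G) :
    fixedSubgroup (MulAut.congr e ψ).toMonoidHom =
      (fixedSubgroup ψ.toMonoidHom).map e.toMonoidHom := by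
  ext g
  rw [Subgroup.mem_map_equiv]
  exact e.eq_symm_apply.symm.trans Iff.rfl

theorem IsFreeOfRankLE.fixedSubgroup_of_pow_prime_eq_one (hG : IsFreeOfRankLE G r) {p : ℕ}
    [Fact p.Prime] {ψ : MulAut G} (hψ : ψ ^ p = 1) :
    IsFreeOfRankLE (fixedSubgroup ψ.toMonoidHom) r := by
  obtain ⟨s, hs, ⟨b⟩⟩ := hG
  obtain ⟨t, ht, ⟨b'⟩⟩ := isFreeOfRankLE_fixedSubgroup_freeGroup
    (ψ := MulAut.congr b.repr ψ) (p := p) (by rw [← map_pow, hψ, map_one])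
  rw [Nat.card_fin] at ht
  exact ⟨t, ht.trans hs, ⟨b'.map <| (MulEquiv.subgroupCongr (fixedSubgroup_congr b.repr ψ)).trans
    (b.repr.subgroupMap _).symm⟩⟩

theorem fixedSubgroup_le_fixedSubgroup_pow (ψ : MulAut G) (k : ℕ) :
    fixedSubgroup ψ.toMonoidHom ≤ fixedSubgroup (ψ ^ k).toMonoidHom := fun _ hg ↦
  apply_eq_of_mem_zpowers (pow_mem (Subgroup.mem_zpowers ψ) k) hg

theorem apply_mem_fixedSubgroup_pow_iff {ψ : MulAut G} {k : ℕ} {g : G} :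
    ψ g ∈ fixedSubgroup (ψ ^ k).toMonoidHom ↔ g ∈ fixedSubgroup (ψ ^ k).toMonoidHom := by
  change (ψ ^ k * ψ) g = ψ g ↔ (ψ ^ k) g = g
  rw [← pow_succ, pow_succ', MulAut.mul_apply, ψ.injective.eq_iff]

/-- The restriction of `ψ` to the fixed subgroup of `ψ ^ k`, on which it has order dividing `k`. -/
def restrictFixedPow (ψ : MulAut G) (k : ℕ) : MulAut (fixedSubgroup (ψ ^ k).toMonoidHom) where
  toFun g := ⟨ψ g, apply_mem_fixedSubgroup_pow_iff.2 g.2⟩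
  invFun g := ⟨ψ.symm g, apply_mem_fixedSubgroup_pow_iff.1 (by simpa using g.2)⟩
  left_inv g := Subtype.ext (by simp)
  right_inv g := Subtype.ext (by simp)
  map_mul' _ _ := Subtype.ext (map_mul ψ _ _)

theorem restrictFixedPow_pow (ψ : MulAut G) (k : ℕ) : restrictFixedPow ψ k ^ k = 1 := by
  have coe_pow (i : ℕ) (g) : ((restrictFixedPow ψ k ^ i) g : G) = (ψ ^ i) g := by
    induction i with
    | zero => rfl
    | succ i ih => rw [pow_succ', pow_succ', MulAut.mul_apply, MulAut.mul_apply, ← ih]; rfl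
  ext g
  exact (coe_pow k g).trans g.2

theorem fixedSubgroup_restrictFixedPow (ψ : MulAut G) (k : ℕ) :
    fixedSubgroup (restrictFixedPow ψ k).toMonoidHom =
      (fixedSubgroup ψ.toMonoidHom).subgroupOf (fixedSubgroup (ψ ^ k).toMonoidHom) := by
  ext g
  exact Subtype.ext_iff

theorem IsFreeOfRankLE.fixedSubgroup_of_pow {m : ℕ} (hm : m ≠ 0) {ψ : MulAut G}
    (h : IsFreeOfRankLE (fixedSubgroup (ψ ^ m).toMonoidHom) r) :
    IsFreeOfRankLE (fixedSubgroup ψ.toMonoidHom) r := by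
  induction m using Nat.recOnMul generalizing ψ with
  | zero => exact absurd rfl hm
  | one => rwa [pow_one] at h
  | prime p hp =>
    have : Fact p.Prime := ⟨hp⟩
    have := h.fixedSubgroup_of_pow_prime_eq_one (restrictFixedPow_pow ψ p)
    rw [fixedSubgroup_restrictFixedPow] at this
    exact this.of_mulEquiv (Subgroup.subgroupOfEquivOfLe (fixedSubgroup_le_fixedSubgroup_pow ψ p))
  | mul a b iha ihb =>
    rw [pow_mul] at h
    exact iha (left_ne_zero_of_mul hm) (ihb (right_ne_zero_of_mul hm) h)

end Rank

open scoped InnerProductSpace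

section Tikhonov

open ContinuousLinearMap Filter Topology

variable {E F : Type*} [NormedAddCommGroup E] [InnerProductSpace ℝ E] [CompleteSpace E]
  [NormedAddCommGroup F] [InnerProductSpace ℝ F] [CompleteSpace F] {ε : ℝ}

/-- Tikhonov's regularised inverse `T† (T T† + ε)⁻¹` of an operator `T`. -/
noncomputable def regInverse (T : E →L[ℝ] F) (ε : ℝ) : F →L[ℝ] E :=
  adjoint T ∘L Ring.inverse (T ∘L adjoint T + ε • 1)

theorem isUnit_comp_adjoint_add_smul_one (T : E →L[ℝ] F) (hε : 0 < ε) :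
    IsUnit (T ∘L adjoint T + ε • 1) := by
  lift ε to NNReal using hε.le
  refine isUnit_of_forall_le_norm_inner_map _ (NNReal.coe_pos.1 hε) fun x ↦ ?_
  have : ⟪(T ∘L adjoint T + (ε : ℝ) • 1) x, x⟫_ℝ = ‖adjoint T x‖ ^ 2 + ε * ‖x‖ ^ 2 := by
    simp [inner_add_left, real_inner_smul_left, ← adjoint_inner_right]
  rw [this, mul_comm]
  exact (le_add_of_nonneg_left (sq_nonneg _)).trans (le_abs_self _)

theorem adjoint_sub_apply_regInverse (T : E →L[ℝ] F) (hε : 0 < ε) (w : F) :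
    adjoint T (w - T (regInverse T ε w)) = ε • regInverse T ε w := by
  have : T (regInverse T ε w) + ε • Ring.inverse (T ∘L adjoint T + ε • 1) w = w :=
    DFunLike.congr_fun (Ring.mul_inverse_cancel _ (isUnit_comp_adjoint_add_smul_one T hε)) w
  rw [sub_eq_iff_eq_add'.2 this.symm, map_smul]
  rfl

theorem norm_sub_apply_regInverse_sq_add_le (T : E →L[ℝ] F) (hε : 0 < ε) (w : F) (v : E) :
    ‖w - T (regInverse T ε w)‖ ^ 2 + ε * ‖regInverse T ε w‖ ^ 2 ≤
      ‖w - T v‖ ^ 2 + ε * ‖v‖ ^ 2 := by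
  have normal_eq := adjoint_sub_apply_regInverse T hε w
  generalize regInverse T ε w = v₀ at *
  obtain ⟨d, rfl⟩ : ∃ d, v = v₀ + d := ⟨v - v₀, (add_sub_cancel v₀ v).symm⟩
  have inner_residual : ⟪w - T v₀, T d⟫_ℝ = ε * ⟪v₀, d⟫_ℝ := by
    rw [← adjoint_inner_left, normal_eq, real_inner_smul_left]
  rw [map_add, ← sub_sub, norm_sub_sq_real (w - T v₀) (T d), inner_residual, norm_add_sq_real]
  nlinarith [sq_nonneg ‖T d‖, mul_nonneg hε.le (sq_nonneg ‖d‖)]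

theorem norm_regInverse_apply_le (T : E →L[ℝ] F) (hε : 0 < ε) (v : E) :
    ‖regInverse T ε (T v)‖ ≤ ‖v‖ := by
  have := norm_sub_apply_regInverse_sq_add_le T hε (T v) v
  rw [sub_self, norm_zero, zero_pow two_ne_zero, zero_add] at this
  refine le_of_sq_le_sq (le_of_mul_le_mul_left ?_ hε) (norm_nonneg v)
  exact (le_add_of_nonneg_left (sq_nonneg _)).trans this

theorem tendsto_apply_regInverse {T : E →L[ℝ] F} (hT : DenseRange T) (w : F) :
    Tendsto (fun ε ↦ T (regInverse T ε w)) (𝓝[>] 0) (𝓝 w) := by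
  refine Metric.tendsto_nhds.2 fun δ hδ ↦ ?_
  obtain ⟨v, hv⟩ := hT.exists_dist_lt w hδ
  rw [dist_eq_norm] at hv
  have bound_lt : ∀ᶠ ε in 𝓝[>] (0 : ℝ), ‖w - T v‖ ^ 2 + ε * ‖v‖ ^ 2 < δ ^ 2 := by
    refine nhdsWithin_le_nhds (ContinuousAt.eventually_lt (by fun_prop) continuousAt_const ?_)
    simpa using pow_lt_pow_left₀ hv (norm_nonneg _) two_ne_zero
  filter_upwards [bound_lt, self_mem_nhdsWithin] with ε hlt hε
  rw [dist_comm, dist_eq_norm]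
  refine lt_of_pow_lt_pow_left₀ 2 hδ.le (lt_of_le_of_lt ?_ hlt)
  exact (le_add_of_nonneg_right (mul_nonneg (le_of_lt hε) (sq_nonneg _))).trans
    (norm_sub_apply_regInverse_sq_add_le T hε w v)

theorem regInverse_apply_of_comp_eq {T : E →L[ℝ] F} (hε : 0 < ε) {U : E →L[ℝ] E}
    {V : F →L[ℝ] F} (hT : ∀ v, T (U v) = V (T v)) (hT' : ∀ w, adjoint T (V w) = U (adjoint T w))
    (w : F) :
    regInverse T ε (V w) = U (regInverse T ε w) := by
  obtain ⟨u, hu⟩ := isUnit_comp_adjoint_add_smul_one T hε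
  have hV : Commute V u := by
    rw [hu]
    refine .add_right (ContinuousLinearMap.ext fun w ↦ ?_) ((Commute.one_right V).smul_right ε)
    exact (hT _).symm.trans (congrArg T (hT' w).symm)
  rw [regInverse, ← hu, Ring.inverse_unit]
  exact (congrArg (adjoint T) (DFunLike.congr_fun hV.units_inv_right.eq w).symm).trans (hT' _)

end Tikhonov

section SquareSummable

open ContinuousLinearMap

variable {α β I J G : Type*}

/-- The Hilbert space `ℓ²(α)` of square-summable real functions on `α`. -/
abbrev EllTwo (α : Type*) : Type _ := lp (fun _ : α ↦ ℝ) 2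

open Classical in
/-- The standard basis vector of `ℓ²(α)` at `a`. -/
noncomputable def stdVec (a : α) : EllTwo α := lp.single 2 a 1

theorem inner_stdVec_left (a : α) (f : EllTwo α) : ⟪stdVec a, f⟫_ℝ = f a := by
  classical
  simp [stdVec, lp.inner_single_left]

theorem inner_stdVec_right (a : α) (f : EllTwo α) : ⟪f, stdVec a⟫_ℝ = f a := by
  rw [real_inner_comm, inner_stdVec_left]

open Classical in
theorem stdVec_apply (a b : α) : stdVec a b = if b = a then 1 else 0 := by
  rw [stdVec, lp.single_apply, Pi.single_apply]

theorem stdVec_apply_self (a : α) : stdVec a a = 1 := by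
  rw [stdVec_apply, if_pos rfl]

theorem norm_stdVec (a : α) : ‖(stdVec a : EllTwo α)‖ = 1 := by
  classical
  simp [stdVec, lp.norm_single]

theorem memℓp_two_iff {f : α → ℝ} : Memℓp f 2 ↔ Summable fun a ↦ f a ^ 2 := by
  rw [memℓp_gen_iff (by norm_num)]
  simp

theorem norm_sq_eq_tsum (f : EllTwo α) : ‖f‖ ^ 2 = ∑' a, f a ^ 2 := by
  simpa using lp.norm_rpow_eq_tsum (p := 2) (by norm_num) f

/-- Restriction of square-summable functions along an injection. -/
noncomputable def pullback (e : α ↪ β) : EllTwo β →L[ℝ] EllTwo α :=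
  LinearMap.mkContinuous
    { toFun f := ⟨fun a ↦ f (e a),
        memℓp_two_iff.2 ((memℓp_two_iff.1 (lp.memℓp f)).comp_injective e.injective)⟩
      map_add' _ _ := rfl
      map_smul' _ _ := rfl } 1 fun f ↦ by
    rw [one_mul, ← sq_le_sq₀ (norm_nonneg _) (norm_nonneg _), norm_sq_eq_tsum, norm_sq_eq_tsum]
    exact tsum_comp_le_tsum_of_inj (memℓp_two_iff.1 (lp.memℓp f)) (fun _ ↦ sq_nonneg _) e.injective

theorem pullback_apply (e : α ↪ β) (f : EllTwo β) (a : α) : pullback e f a = f (e a) := rfl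

/-- The action of a permutation `e` of `G` on `ℓ²(I × G)`, sending `f` to
`(i, y) ↦ f (i, e y)`. -/
noncomputable def permute (I : Type*) (e : Equiv.Perm G) : EllTwo (I × G) ≃ₗᵢ[ℝ] EllTwo (I × G) :=
  LinearIsometryEquiv.ofSurjective
    { toLinearMap := (pullback ((Equiv.refl I).prodCongr e).toEmbedding).toLinearMap
      norm_map' f := by
        rw [← sq_eq_sq₀ (norm_nonneg _) (norm_nonneg _), norm_sq_eq_tsum, norm_sq_eq_tsum]
        exact ((Equiv.refl I).prodCongr e).tsum_eq fun a ↦ f a ^ 2 }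
    fun f ↦ ⟨pullback ((Equiv.refl I).prodCongr e.symm).toEmbedding f,
      lp.ext (funext fun p ↦ congrArg f (((Equiv.refl I).prodCongr e).symm_apply_apply p))⟩

theorem permute_apply (e : Equiv.Perm G) (f : EllTwo (I × G)) (i : I) (y : G) :
    permute I e f (i, y) = f (i, e y) := rfl

theorem permute_symm (e : Equiv.Perm G) : (permute I e).symm = permute I e.symm := by
  ext f p
  obtain ⟨g, rfl⟩ := (permute I e).surjective f
  rw [LinearIsometryEquiv.symm_apply_apply]
  exact congrArg g (Prod.ext rfl (e.apply_symm_apply p.2).symm)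

theorem permute_stdVec (e : Equiv.Perm G) (i : I) (y : G) :
    permute I e (stdVec (i, y)) = stdVec (i, e.symm y) := by
  refine ext_inner_right ℝ fun f ↦ ?_
  rw [LinearIsometryEquiv.inner_map_eq_flip, permute_symm, inner_stdVec_left, inner_stdVec_left,
    permute_apply]

theorem norm_apply_le (f : EllTwo α) (a : α) : |f a| ≤ ‖f‖ := by
  simpa using lp.norm_apply_le_norm two_ne_zero f a

theorem pullback_sectR_stdVec (j : J) (b : β) :
    pullback (.sectR j β) (stdVec (j, b)) = stdVec b := by
  classical
  ext z
  simp [pullback_apply, stdVec_apply]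

theorem pullback_sectR_stdVec_of_ne {j k : J} (hjk : j ≠ k) (b : β) :
    pullback (.sectR k β) (stdVec (j, b)) = 0 := by
  classical
  ext z
  simp [pullback_apply, stdVec_apply, hjk.symm]

theorem exists_operator_prod {E : Type*} [NormedAddCommGroup E] [NormedSpace ℝ E] [Finite J]
    (A : J → E →L[ℝ] EllTwo β) :
    ∃ T : E →L[ℝ] EllTwo (J × β), ∀ v j b, T v (j, b) = A j v b := by
  classical
  have := Fintype.ofFinite J
  refine ⟨∑ j, adjoint (pullback (.sectR j β)) ∘L A j, fun v j b ↦ ?_⟩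
  have (k : J) : ⟪pullback (.sectR k β) (stdVec (j, b)), A k v⟫_ℝ =
      if j = k then A j v b else 0 := by
    split_ifs with hjk
    · subst hjk
      rw [pullback_sectR_stdVec, inner_stdVec_left]
    · rw [pullback_sectR_stdVec_of_ne hjk, inner_zero_left]
  rw [← inner_stdVec_left, sum_apply, inner_sum]
  simp [adjoint_inner_right, this]

end SquareSummable

section Trace

open ContinuousLinearMap Filter Topology

variable {I J G : Type*} [Group G]

/-- A bounded operator `ℓ²(I × G) → ℓ²(J × G)` is equivariant if it commutes with the right
translations of `G`. -/
def IsEquivariant (T : EllTwo (I × G) →L[ℝ] EllTwo (J × G)) : Prop :=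
  ∀ u f, T (permute I (Equiv.mulRight u) f) = permute J (Equiv.mulRight u) (T f)

variable {T : EllTwo (I × G) →L[ℝ] EllTwo (J × G)} {S : EllTwo (J × G) →L[ℝ] EllTwo (I × G)}

theorem IsEquivariant.adjoint (hT : IsEquivariant T) :
    IsEquivariant (ContinuousLinearMap.adjoint T) := fun u f ↦ by
  refine ext_inner_right ℝ fun v ↦ ?_
  rw [adjoint_inner_left, LinearIsometryEquiv.inner_map_eq_flip,
    LinearIsometryEquiv.inner_map_eq_flip, permute_symm, permute_symm, adjoint_inner_left,
    Equiv.mulRight_symm, hT]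

theorem IsEquivariant.regInverse (hT : IsEquivariant T) {ε : ℝ} (hε : 0 < ε) :
    IsEquivariant (BestvinaHandel.regInverse T ε) := fun u f ↦
  regInverse_apply_of_comp_eq hε
    (U := (permute I (Equiv.mulRight u)).toContinuousLinearEquiv.toContinuousLinearMap)
    (V := (permute J (Equiv.mulRight u)).toContinuousLinearEquiv.toContinuousLinearMap)
    (hT u) (hT.adjoint u) f

theorem IsEquivariant.apply_stdVec (hT : IsEquivariant T) (i : I) (j : J) (g : G) :
    T (stdVec (i, g)) (j, 1) = T (stdVec (i, 1)) (j, g⁻¹) := by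
  have : stdVec (i, g) = permute I (Equiv.mulRight g⁻¹) (stdVec (i, 1)) := by
    simp [permute_stdVec]
  rw [this, hT, permute_apply]
  exact congrArg (fun y ↦ T _ (j, y)) (one_mul g⁻¹)

theorem hasSum_apply_stdVec {α β : Type*} (T : EllTwo α →L[ℝ] EllTwo β) (f : EllTwo α) (b : β) :
    HasSum (fun a ↦ T (stdVec a) b * f a) (T f b) := by
  have := lp.hasSum_inner (𝕜 := ℝ) f (ContinuousLinearMap.adjoint T (stdVec b))
  rw [adjoint_inner_right, inner_stdVec_right] at this
  refine this.congr_fun fun a ↦ ?_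
  rw [← inner_stdVec_left a (ContinuousLinearMap.adjoint T _), adjoint_inner_right,
    inner_stdVec_right]
  rfl

/-- The von Neumann trace of an operator on `ℓ²(I × G)` that commutes with right translations. -/
noncomputable def vonNeumannTrace [Fintype I] (B : EllTwo (I × G) →L[ℝ] EllTwo (I × G)) : ℝ :=
  ∑ i, B (stdVec (i, 1)) (i, 1)

variable [Fintype I] [Fintype J]

theorem vonNeumannTrace_comp (hT : IsEquivariant T) (S : EllTwo (J × G) →L[ℝ] EllTwo (I × G)) :
    vonNeumannTrace (T ∘L S) =
      ∑ j, ∑ i, ∑' g, T (stdVec (i, 1)) (j, g⁻¹) * S (stdVec (j, 1)) (i, g) := by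
  refine Finset.sum_congr rfl fun j _ ↦ ?_
  have hsum := hasSum_apply_stdVec T (S (stdVec (j, 1))) (j, 1)
  rw [comp_apply, ← hsum.tsum_eq, hsum.summable.tsum_prod, tsum_fintype]
  simp only [hT.apply_stdVec]

theorem vonNeumannTrace_comp_comm (hT : IsEquivariant T) (hS : IsEquivariant S) :
    vonNeumannTrace (T ∘L S) = vonNeumannTrace (S ∘L T) := by
  rw [vonNeumannTrace_comp hT, vonNeumannTrace_comp hS, Finset.sum_comm]
  refine Finset.sum_congr rfl fun i _ ↦ Finset.sum_congr rfl fun j _ ↦ ?_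
  rw [← Equiv.tsum_eq (Equiv.inv G)]
  simp only [Equiv.inv_apply, inv_inv, mul_comm]

theorem card_le_card_of_denseRange (hT : IsEquivariant T) (hd : DenseRange T) :
    Fintype.card J ≤ Fintype.card I := by
  have trace_le {ε : ℝ} (hε : 0 < ε) :
      vonNeumannTrace (T ∘L regInverse T ε) ≤ Fintype.card I := by
    rw [vonNeumannTrace_comp_comm hT (hT.regInverse hε)]
    refine (Finset.sum_le_card_nsmul _ _ 1 fun i _ ↦ ?_).trans_eq (by simp)
    calc _ ≤ ‖regInverse T ε (T (stdVec (i, 1)))‖ := (le_abs_self _).trans (norm_apply_le _ _)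
      _ ≤ ‖(stdVec (i, 1) : EllTwo (I × G))‖ := norm_regInverse_apply_le T hε _
      _ = 1 := norm_stdVec _
  have trace_tendsto : Tendsto (fun ε ↦ vonNeumannTrace (T ∘L regInverse T ε)) (𝓝[>] 0)
      (𝓝 (∑ _j : J, 1)) := by
    refine tendsto_finsetSum _ fun j _ ↦ ?_
    rw [← stdVec_apply_self ((j, 1) : J × G), ← inner_stdVec_left]
    exact (tendsto_const_nhds.inner (tendsto_apply_regInverse hd _)).congr fun ε ↦
      inner_stdVec_left _ _
  have := le_of_tendsto trace_tendsto (eventually_mem_nhdsWithin.mono fun ε hε ↦ trace_le hε)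
  simpa using this

end Trace

section Potential

variable {I J G : Type*} [Group G] {h : J → G} {φ : G → ℝ} {m : EllTwo (J × G)}

/-- `m` is the gradient of the function `φ` on `G` along the family `h`, which need not consist of
generators: it records the increments of `φ` under left multiplication by the members of `h`. -/
def IsGradient (h : J → G) (φ : G → ℝ) (m : EllTwo (J × G)) : Prop :=
  ∀ j y, m (j, y) = φ (h j * y) - φ y

theorem IsGradient.unique {m' : EllTwo (J × G)} (hm : IsGradient h φ m)
    (hm' : IsGradient h φ m') : m = m' :=
  lp.ext (funext fun p ↦ (hm p.1 p.2).trans (hm' p.1 p.2).symm)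

theorem IsGradient.comp_mulRight (hm : IsGradient h φ m) (u : G) :
    IsGradient h (φ ∘ Equiv.mulRight u) (permute J (Equiv.mulRight u) m) := fun j y ↦ by
  rw [permute_apply, hm]
  simp [mul_assoc]

theorem IsGradient.comp_mulEquiv {θ : MulAut G} (hm : IsGradient (θ ∘ h) φ m) :
    IsGradient h (φ ∘ θ) (permute J θ.toEquiv m) := fun j y ↦ by
  rw [permute_apply, hm]
  simp

theorem exists_forall_sub_eq {A : Type*} [AddCommGroup A] (b : FreeGroupBasis I G)
    (m : I → G → A) : ∃ φ : G → A, ∀ i y, φ (b i * y) - φ y = m i y := by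
  let L : G →* (G → Multiplicative A) ⋊[mulAutArrow] G :=
    b.lift fun i ↦ ⟨fun z ↦ .ofAdd (m i ((b i)⁻¹ * z)), b i⟩
  have L_basis (i) : L (b i) = ⟨fun z ↦ .ofAdd (m i ((b i)⁻¹ * z)), b i⟩ :=
    congrFun (b.lift.symm_apply_apply _) i
  refine ⟨fun y ↦ ((L y).left y).toAdd, fun i y ↦ ?_⟩
  simp only [map_mul, L_basis, sub_eq_iff_eq_add, SemidirectProduct.mul_left, Pi.mul_apply,
    toAdd_mul, toAdd_ofAdd, inv_mul_cancel_left]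
  congr 2
  exact congrArg (L y).left (inv_mul_cancel_left _ _)

theorem exists_isGradient (b : FreeGroupBasis I G) (m : EllTwo (I × G)) :
    ∃ φ, IsGradient b φ m :=
  let ⟨φ, hφ⟩ := exists_forall_sub_eq b fun i y ↦ m (i, y)
  ⟨φ, fun i y ↦ (hφ i y).symm⟩

theorem exists_difference_operator {g : G} (hg : g ∈ Subgroup.closure (Set.range h)) :
    ∃ A : EllTwo (J × G) →L[ℝ] EllTwo G,
      ∀ m φ, IsGradient h φ m → ∀ y, A m y = φ (g * y) - φ y := by
  induction hg using Subgroup.closure_induction with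
  | mem _ hx =>
    obtain ⟨j, rfl⟩ := hx
    exact ⟨pullback (.sectR j G), fun m φ hm y ↦ hm j y⟩
  | one => exact ⟨0, fun m φ _ y ↦ by simp⟩
  | mul g g' _ _ ih ih' =>
    obtain ⟨A, hA⟩ := ih
    obtain ⟨A', hA'⟩ := ih'
    refine ⟨pullback (Equiv.mulLeft g').toEmbedding ∘L A + A', fun m φ hm y ↦ ?_⟩
    have := hA m φ hm (g' * y)
    rw [← mul_assoc] at this
    exact (congrArg₂ (· + ·) this (hA' m φ hm y)).trans (sub_add_sub_cancel _ _ _)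
  | inv g _ ih =>
    obtain ⟨A, hA⟩ := ih
    refine ⟨-(pullback (Equiv.mulLeft g⁻¹).toEmbedding ∘L A), fun m φ hm y ↦ ?_⟩
    have := hA m φ hm (g⁻¹ * y)
    rw [mul_inv_cancel_left] at this
    exact (congrArg Neg.neg this).trans (neg_sub _ _)

theorem closure_range_basis (b : FreeGroupBasis I G) : Subgroup.closure (Set.range b) = ⊤ := by
  have := congrArg (Subgroup.map b.repr.symm.toMonoidHom) (FreeGroup.closure_range_of I)
  rwa [MonoidHom.map_closure, ← Set.range_comp,
    Subgroup.map_top_of_surjective _ b.repr.symm.surjective] at this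

theorem exists_gradientMap (b : FreeGroupBasis I G) [Finite J] (h : J → G) :
    ∃ T : EllTwo (I × G) →L[ℝ] EllTwo (J × G),
      ∀ m φ, IsGradient b φ m → IsGradient h φ (T m) := by
  choose A hA using fun j ↦ exists_difference_operator (h := b) (g := h j)
    (closure_range_basis b ▸ Subgroup.mem_top _)
  obtain ⟨T, hT⟩ := exists_operator_prod A
  exact ⟨T, fun m φ hm j y ↦ (hT m j y).trans (hA j m φ hm y)⟩

/-- The bounded operator taking the gradient of a function along a basis `b` of `G` to its gradient
along the family `h`. -/
noncomputable def gradientMap (b : FreeGroupBasis I G) [Finite J] (h : J → G) :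
    EllTwo (I × G) →L[ℝ] EllTwo (J × G) :=
  (exists_gradientMap b h).choose

variable [Finite J]

theorem IsGradient.gradientMap {b : FreeGroupBasis I G} {m : EllTwo (I × G)}
    (hm : IsGradient b φ m) (h : J → G) : IsGradient h φ (gradientMap b h m) :=
  (exists_gradientMap b h).choose_spec m φ hm

theorem isEquivariant_gradientMap (b : FreeGroupBasis I G) (h : J → G) :
    IsEquivariant (gradientMap b h) := fun u m ↦
  let ⟨_, hm⟩ := exists_isGradient b m
  ((hm.comp_mulRight u).gradientMap h).unique ((hm.gradientMap h).comp_mulRight u)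

theorem permute_mem_range_gradientMap [Finite I] (b : FreeGroupBasis I G) {h : J → G}
    {θ : MulAut G} (hθ : ∀ j, θ (h j) = h j) (m : EllTwo (I × G)) :
    permute J θ.toEquiv (gradientMap b h m) ∈ (gradientMap b h).range := by
  obtain ⟨φ, hm⟩ := exists_isGradient b m
  have hθ' : θ ∘ h = h := funext hθ
  have twisted : IsGradient b (φ ∘ θ) (permute I θ.toEquiv (gradientMap b (θ ∘ b) m)) :=
    (hm.gradientMap _).comp_mulEquiv
  exact ⟨_, (twisted.gradientMap h).unique (.comp_mulEquiv (hθ'.symm ▸ hm.gradientMap h))⟩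

end Potential

section FiniteSupport

variable {I J ι X G : Type*} [Group G]

theorem finite_setOf_apply_mul_ne {φ : G → ℝ} {S : Set G}
    (hS : ∀ w ∈ S, {q | φ (w * q) ≠ φ q}.Finite) {w : G} (hw : w ∈ Subgroup.closure S) :
    {q | φ (w * q) ≠ φ q}.Finite := by
  induction hw using Subgroup.closure_induction with
  | mem w hw => exact hS w hw
  | one => simp
  | mul w w' _ _ ih ih' =>
    refine (ih'.union (ih.preimage (mul_right_injective w').injOn)).subset fun q hq ↦ ?_
    by_contra! h
    simp only [Set.mem_union, Set.mem_preimage, Set.mem_ofPred_eq, not_or, not_not] at h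
    exact hq (by rw [mul_assoc, h.2, h.1])
  | inv w _ ih =>
    refine (ih.preimage (mul_right_injective w⁻¹).injOn).subset fun q hq ↦ ?_
    simpa using Ne.symm hq

open Classical in
theorem exists_sub_eq_ite (b : FreeGroupBasis ι G) (i : ι) (u : G) :
    ∃ φ : G → ℝ, (∀ k q, φ (b k * q) - φ q = if k = i ∧ q = u then 1 else 0) ∧
      ∀ w, {q | φ (w * q) ≠ φ q}.Finite := by
  obtain ⟨φ, hφ⟩ := exists_forall_sub_eq b fun k q ↦ if k = i ∧ q = u then (1 : ℝ) else 0
  refine ⟨φ, hφ, fun w ↦ finite_setOf_apply_mul_ne (S := Set.range b) ?_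
    (closure_range_basis b ▸ Subgroup.mem_top w)⟩
  rintro _ ⟨k, rfl⟩
  refine (Set.finite_singleton u).subset fun q hq ↦ ?_
  have := sub_ne_zero.2 hq
  rw [hφ] at this
  by_contra hqu
  exact this (if_neg fun h ↦ hqu h.2)

theorem exists_retraction (P : Subgroup G) :
    ∃ r : G → P, (∀ g (q : P), r (g * q) = r g * q) ∧ ∀ q : P, r q = q := by
  obtain ⟨S, hS, one_mem⟩ := P.exists_isComplement_left 1
  refine ⟨fun g ↦ (hS.equiv g).2, fun g q ↦ ?_, fun q ↦ ?_⟩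
  · exact congrArg Prod.snd (hS.equiv_mul_right g q)
  · exact hS.equiv_snd_eq_self_of_mem_of_one_mem one_mem q.2

theorem exists_almost_invariant_extension {P : Subgroup G} {φ : P → ℝ}
    (hφ : ∀ w, {q | φ (w * q) ≠ φ q}.Finite) :
    ∃ Φ : G → ℝ, (∀ q : P, Φ q = φ q) ∧ ∀ g, {q : P | Φ (g * q) ≠ Φ q}.Finite := by
  obtain ⟨r, r_mul, r_coe⟩ := exists_retraction P
  refine ⟨φ ∘ r, fun q ↦ congrArg φ (r_coe q), fun g ↦ ?_⟩
  simpa only [Function.comp_apply, r_mul, r_coe] using hφ (r g)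

-- `C` is the set of vertices of a path from `1` to `g` whose edges are labelled by the `h j`.
theorem exists_finset_forall_apply_mul_eq {h : J → G} {g : G}
    (hg : g ∈ Subgroup.closure (Set.range h)) :
    ∃ C : Finset G, ∀ (φ : G → ℝ) (y : G),
      (∀ j, ∀ c ∈ C, φ (h j * (c * y)) = φ (c * y)) → φ (g * y) = φ y := by
  classical
  induction hg using Subgroup.closure_induction with
  | mem _ hx =>
    obtain ⟨j, rfl⟩ := hx
    exact ⟨{1}, fun φ y hφ ↦ by simpa using hφ j 1⟩
  | one => exact ⟨∅, fun φ y _ ↦ by rw [one_mul]⟩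
  | mul g g' _ _ ih ih' =>
    obtain ⟨C, hC⟩ := ih
    obtain ⟨C', hC'⟩ := ih'
    refine ⟨C' ∪ C.image (· * g'), fun φ y hφ ↦ ?_⟩
    rw [mul_assoc, hC φ (g' * y) fun j c hc ↦ ?_, hC' φ y fun j c hc ↦ ?_]
    · exact hφ j c (Finset.mem_union_left _ hc)
    · rw [← mul_assoc c]
      exact hφ j _ (Finset.mem_union_right _ (Finset.mem_image_of_mem _ hc))
  | inv g _ ih =>
    obtain ⟨C, hC⟩ := ih
    refine ⟨C.image (· * g⁻¹), fun φ y hφ ↦ ?_⟩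
    have := hC φ (g⁻¹ * y) fun j c hc ↦ by
      rw [← mul_assoc c]
      exact hφ j _ (Finset.mem_image_of_mem _ hc)
    rw [← this, mul_inv_cancel_left]

open Pointwise in
theorem finite_setOf_mem_mul_ne [Finite I] (b : I → G) {P : Subgroup G} {Φ : G → ℝ}
    (hΦ : ∀ g, {q : P | Φ (g * q) ≠ Φ q}.Finite) {D : Set G} (hD : D.Finite) :
    {p : I × G | p.2 ∈ D * (P : Set G) ∧ Φ (b p.1 * p.2) ≠ Φ p.2}.Finite := by
  have := hD.to_subtype
  have hfin (x : I × D) : {q : P | Φ (b x.1 * x.2 * q) ≠ Φ (x.2 * q)}.Finite := by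
    refine ((hΦ (b x.1 * x.2)).union (hΦ x.2)).subset fun q hq ↦ ?_
    by_contra! h
    simp only [Set.mem_union, Set.mem_ofPred_eq, not_or, not_not] at h
    exact hq (h.1.trans h.2.symm)
  refine (Set.finite_iUnion fun x ↦ (hfin x).image fun q : P ↦ (x.1, (x.2 * q : G))).subset ?_
  rintro ⟨i, _⟩ ⟨⟨c, hc, q, hq, rfl⟩, hne⟩
  rw [← mul_assoc] at hne
  exact Set.mem_iUnion.2 ⟨(i, ⟨c, hc⟩), ⟨q, hq⟩, hne, rfl⟩

open Classical Pointwise in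
theorem exists_isGradient_eq_on [Finite I] [Finite J] (b : FreeGroupBasis I G) (h : J → G)
    {P : Subgroup G} {Φ : G → ℝ} (hΦ : ∀ g, {q : P | Φ (g * q) ≠ Φ q}.Finite) :
    ∃ m ψ, IsGradient b ψ m ∧ ∀ j, ∀ q ∈ P, ψ (h j * q) - ψ q = Φ (h j * q) - Φ q := by
  choose C hC using fun j ↦ exists_finset_forall_apply_mul_eq (h := b) (g := h j)
    (closure_range_basis b ▸ Subgroup.mem_top _)
  let D : Set G := ⋃ j, C j
  let m (p : I × G) : ℝ := if p.2 ∈ D * (P : Set G) then Φ (b p.1 * p.2) - Φ p.2 else 0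
  have hm : m.HasFiniteSupport := by
    refine (finite_setOf_mem_mul_ne b hΦ (Set.finite_iUnion fun j ↦ (C j).finite_toSet)).subset
      fun p hp ↦ ?_
    simpa [m, sub_ne_zero] using hp
  obtain ⟨ψ, hψ⟩ := exists_isGradient b ⟨m, memℓp_two_iff.2 <|
    summable_of_hasFiniteSupport (hm.subset fun p hp ↦ by simpa using hp)⟩
  refine ⟨_, ψ, hψ, fun j q hq ↦ ?_⟩
  have := hC j (ψ - Φ) q fun i c hc ↦ by
    have hmem : c * q ∈ D * (P : Set G) := Set.mul_mem_mul (Set.mem_iUnion.2 ⟨j, hc⟩) hq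
    have : m (i, c * q) = ψ (b i * (c * q)) - ψ (c * q) := hψ i (c * q)
    simp only [m, if_pos hmem] at this
    exact sub_eq_sub_iff_sub_eq_sub.2 this.symm
  exact sub_eq_sub_iff_sub_eq_sub.1 this

end FiniteSupport

section DenseRange

variable {E F I J ι G : Type*}

section Hilbert

variable [NormedAddCommGroup E] [InnerProductSpace ℝ E] [NormedAddCommGroup F]
  [InnerProductSpace ℝ F] {T : E →L[ℝ] F}

theorem map_mem_orthogonal_range (U : F ≃ₗᵢ[ℝ] F) (hU : ∀ v, U.symm (T v) ∈ T.range) {w : F}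
    (hw : w ∈ T.rangeᗮ) : U w ∈ T.rangeᗮ := by
  rintro _ ⟨v, rfl⟩
  rw [real_inner_comm, LinearIsometryEquiv.inner_map_eq_flip, real_inner_comm]
  exact hw _ (hU v)

theorem exists_mem_orthogonal_range_forall_inner_eq [CompleteSpace F] (U : F ≃ₗᵢ[ℝ] F)
    (hU : ∀ v, U (T v) ∈ T.range) (hU' : ∀ v, U.symm (T v) ∈ T.range) {w : F} (hw : U w = w) :
    ∃ p ∈ T.rangeᗮ, U p = p ∧ ∀ z ∈ T.rangeᗮ, ⟪p, z⟫_ℝ = ⟪w, z⟫_ℝ := by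
  have map_eq : T.rangeᗮ.map (U.toLinearEquiv : F →ₗ[ℝ] F) = T.rangeᗮ := by
    refine le_antisymm (Submodule.map_le_iff_le_comap.2 fun z hz ↦ ?_) fun z hz ↦ ?_
    · exact map_mem_orthogonal_range U hU' hz
    · exact ⟨U.symm z, map_mem_orthogonal_range U.symm hU hz, U.apply_symm_apply z⟩
  refine ⟨T.rangeᗮ.starProjection w, Submodule.starProjection_apply_mem _ w, ?_, fun z hz ↦ ?_⟩
  · have := Submodule.starProjection_map_apply U T.rangeᗮ w
    simpa only [map_eq, U.symm_apply_eq.2 hw.symm] using this.symm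
  · rw [Submodule.inner_starProjection_left_eq_right, Submodule.starProjection_eq_self_iff.2 hz]

end Hilbert

theorem inner_eq_inner_of_forall {f g z : EllTwo J} (h : ∀ a, z a ≠ 0 → f a = g a) :
    ⟪f, z⟫_ℝ = ⟪g, z⟫_ℝ := by
  simp only [lp.inner_eq_tsum]
  refine tsum_congr fun a ↦ ?_
  by_cases hz : z a = 0
  · simp [hz]
  · rw [h a hz]

theorem apply_eq_zero_of_permute_eq {e : Equiv.Perm G} {f : EllTwo (J × G)}
    (hf : permute J e f = f) {y : G} (hy : ∀ k ≠ 0, (e ^ k) y ≠ y) (j : J) : f (j, y) = 0 := by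
  have orbit_eq (k : ℕ) : f (j, (e ^ k) y) = f (j, y) := by
    induction k with
    | zero => rfl
    | succ k ih => rw [pow_succ', Equiv.Perm.mul_apply, ← permute_apply, hf, ih]
  have orbit_injective : Function.Injective fun k : ℕ ↦ (j, (e ^ k) y) := by
    refine Function.Injective.of_lt_imp_ne fun k l hkl heq ↦ hy (l - k) (by omega) ?_
    refine (e ^ k).injective ?_
    rw [← Equiv.Perm.mul_apply, ← pow_add, Nat.add_sub_cancel' hkl.le]
    exact (congrArg Prod.snd heq).symm
  have := (memℓp_two_iff.1 (lp.memℓp f)).comp_injective orbit_injective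
  simp only [Function.comp_def, orbit_eq] at this
  simpa using (summable_const_iff _).1 this

variable [Group G]

theorem denseRange_of_vanishing {T : EllTwo (I × G) →L[ℝ] EllTwo (J × G)} (hT : IsEquivariant T)
    {e : Equiv.Perm G} (he : e 1 = 1) (heT : ∀ v, permute J e (T v) ∈ T.range)
    (heT' : ∀ v, permute J e.symm (T v) ∈ T.range) {P : Set G}
    (hP : ∀ y ∉ P, ∀ k ≠ 0, (e ^ k) y ≠ y)
    (vanishing : ∀ f ∈ T.rangeᗮ, (∀ j, ∀ y ∉ P, f (j, y) = 0) → f = 0) : DenseRange T := by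
  have apply_one (j : J) (z) (hz : z ∈ T.rangeᗮ) : z (j, 1) = 0 := by
    obtain ⟨p, hp, p_invariant, hpz⟩ := exists_mem_orthogonal_range_forall_inner_eq (permute J e)
      heT (by rwa [permute_symm])
      ((permute_stdVec e j 1).trans (by rw [e.symm_apply_eq.2 he.symm]))
    have : p = 0 := vanishing p hp fun j y hy ↦ apply_eq_zero_of_permute_eq p_invariant (hP y hy) j
    rw [← inner_stdVec_left, ← hpz z hz, this, inner_zero_left]
  have orthogonal_eq_bot : T.rangeᗮ = ⊥ := by
    refine (Submodule.eq_bot_iff _).2 fun z hz ↦ lp.ext (funext fun ⟨j, y⟩ ↦ ?_)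
    have translate_mem : permute J (Equiv.mulRight y) z ∈ T.rangeᗮ := by
      refine map_mem_orthogonal_range _ (fun v ↦ ?_) hz
      rw [permute_symm, Equiv.mulRight_symm, ← hT]
      exact ⟨_, rfl⟩
    have := apply_one j _ translate_mem
    exact (congrArg (fun x ↦ z (j, x)) (one_mul y)).symm.trans this
  exact Submodule.dense_iff_topologicalClosure_eq_top.2
    (Submodule.topologicalClosure_eq_top_iff.2 orthogonal_eq_bot)

variable [Finite I] [Finite J] (b : FreeGroupBasis I G) {P : Subgroup G} (c : FreeGroupBasis ι P)
  (e : J ↪ ι)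

theorem exists_gradientMap_eq_stdVec (j : J) (u : P) :
    ∃ m, ∀ k, ∀ q ∈ P, gradientMap b (fun k ↦ (c (e k) : G)) m (k, q) =
      stdVec (j, (u : G)) (k, q) := by
  classical
  obtain ⟨φ, hφ, φ_fin⟩ := exists_sub_eq_ite c (e j) u
  obtain ⟨Φ, hΦ, Φ_fin⟩ := exists_almost_invariant_extension φ_fin
  obtain ⟨m, ψ, hm, hψ⟩ := exists_isGradient_eq_on b (fun k ↦ (c (e k) : G)) Φ_fin
  refine ⟨m, fun k q hq ↦ ?_⟩
  rw [hm.gradientMap, hψ k q hq]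
  lift q to P using hq
  rw [← Subgroup.coe_mul, hΦ, hΦ, hφ, stdVec_apply]
  simp

theorem eq_zero_of_mem_orthogonal_range {f : EllTwo (J × G)}
    (hf : f ∈ (gradientMap b (fun j ↦ (c (e j) : G))).rangeᗮ) (hfP : ∀ j, ∀ y ∉ P, f (j, y) = 0) :
    f = 0 := by
  ext ⟨j, y⟩
  by_cases hy : y ∈ P
  · obtain ⟨m, hm⟩ := exists_gradientMap_eq_stdVec b c e j ⟨y, hy⟩
    rw [← inner_stdVec_left, ← inner_eq_inner_of_forall fun p hp ↦ ?_]
    · exact hf _ ⟨m, rfl⟩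
    · exact hm p.1 p.2 (not_imp_comm.1 (hfP p.1 p.2) hp)
  · exact hfP j y hy

theorem denseRange_gradientMap {θ : MulAut G} (hθ : ∀ j, θ (c (e j)) = c (e j))
    (hP : ∀ y ∉ P, ∀ k ≠ 0, (θ ^ k) y ≠ y) :
    DenseRange (gradientMap b (fun j ↦ (c (e j) : G))) := by
  have hθ' (j) : θ⁻¹ (c (e j)) = c (e j) := (MulEquiv.symm_apply_eq θ).2 (hθ j).symm
  have hP' : ∀ y ∉ (P : Set G), ∀ k ≠ 0, (θ.toEquiv ^ k) y ≠ y := fun y hy k hk h ↦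
    hP y hy k hk ((DFunLike.congr_fun (map_pow (MulAut.toPerm G) θ k) y).trans h)
  have stable := permute_mem_range_gradientMap b (θ := θ) hθ
  have stable' := permute_mem_range_gradientMap b (θ := θ⁻¹) hθ'
  exact denseRange_of_vanishing (isEquivariant_gradientMap b _) (map_one θ) stable stable' hP'
    fun f hf ↦ eq_zero_of_mem_orthogonal_range b c e hf

end DenseRange

section Periodic

variable {I ι G : Type*} [Group G] {r : ℕ}

theorem fixedSubgroup_pow_le_of_dvd (ψ : MulAut G) {k l : ℕ} (hkl : k ∣ l) :
    fixedSubgroup (ψ ^ k).toMonoidHom ≤ fixedSubgroup (ψ ^ l).toMonoidHom := by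
  obtain ⟨c, rfl⟩ := hkl
  rw [pow_mul]
  exact fixedSubgroup_le_fixedSubgroup_pow _ c

/-- The subgroup of elements of finite orbit under an automorphism `ψ`, that is, of those fixed by
some positive power of `ψ`. -/
def periodicSubgroup (ψ : MulAut G) : Subgroup G where
  carrier := {g | ∃ k ≠ 0, g ∈ fixedSubgroup (ψ ^ k).toMonoidHom}
  one_mem' := ⟨1, one_ne_zero, one_mem _⟩
  mul_mem' := fun ⟨k, hk, hg⟩ ⟨l, hl, hg'⟩ ↦ ⟨k * l, mul_ne_zero hk hl, mul_mem
    (fixedSubgroup_pow_le_of_dvd ψ (dvd_mul_right k l) hg)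
    (fixedSubgroup_pow_le_of_dvd ψ (dvd_mul_left l k) hg')⟩
  inv_mem' := fun ⟨k, hk, hg⟩ ↦ ⟨k, hk, inv_mem hg⟩

theorem exists_common_period {ψ : MulAut G} [Finite ι] (h : ι → periodicSubgroup ψ) :
    ∃ k ≠ 0, ∀ i, (h i : G) ∈ fixedSubgroup (ψ ^ k).toMonoidHom := by
  have := Fintype.ofFinite ι
  choose k hk hg using fun i ↦ (h i).2
  exact ⟨∏ i, k i, Finset.prod_ne_zero_iff.2 fun i _ ↦ hk i, fun i ↦
    fixedSubgroup_pow_le_of_dvd ψ (Finset.dvd_prod_of_mem k (Finset.mem_univ i)) (hg i)⟩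

theorem card_le_of_freeGroupBasis_periodicSubgroup [Fintype I] (b : FreeGroupBasis I G)
    {ψ : MulAut G} (c : FreeGroupBasis ι (periodicSubgroup ψ)) (s : Finset ι) :
    s.card ≤ Fintype.card I := by
  obtain ⟨k, hk, hfix⟩ := exists_common_period fun i : s ↦ c i
  have aperiodic : ∀ y ∉ periodicSubgroup ψ, ∀ l ≠ 0, ((ψ ^ k) ^ l) y ≠ y := fun y hy l hl h ↦
    hy ⟨k * l, mul_ne_zero hk hl, by rwa [pow_mul]⟩
  rw [← Fintype.card_coe]
  exact card_le_card_of_denseRange (isEquivariant_gradientMap b _)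
    (denseRange_gradientMap b c (.subtype _) hfix aperiodic)

theorem IsFreeOfRankLE.periodicSubgroup (hG : IsFreeOfRankLE G r) (ψ : MulAut G) :
    IsFreeOfRankLE (periodicSubgroup ψ) r := by
  obtain ⟨s, hs, ⟨b⟩⟩ := hG
  have := b.isFreeGroup
  let c := IsFreeGroup.basis (BestvinaHandel.periodicSubgroup ψ)
  refine .of_forall_finset_card_le c fun t ↦ ?_
  exact (card_le_of_freeGroupBasis_periodicSubgroup b c t).trans (by rwa [Fintype.card_fin])

theorem exists_periodicSubgroup_eq {ψ : MulAut G} (h : IsFreeOfRankLE (periodicSubgroup ψ) r) :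
    ∃ m ≠ 0, periodicSubgroup ψ = fixedSubgroup (ψ ^ m).toMonoidHom := by
  obtain ⟨s, -, ⟨c⟩⟩ := h
  obtain ⟨m, hm, hfix⟩ := exists_common_period c
  refine ⟨m, hm, le_antisymm (fun g hg ↦ ?_) fun g hg ↦ ⟨m, hm, hg⟩⟩
  exact DFunLike.congr_fun (c.ext_hom ((ψ ^ m).toMonoidHom.comp (periodicSubgroup ψ).subtype)
    (periodicSubgroup ψ).subtype hfix) ⟨g, hg⟩

theorem IsFreeOfRankLE.fixedSubgroup (hG : IsFreeOfRankLE G r) (ψ : MulAut G) :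
    IsFreeOfRankLE (fixedSubgroup ψ.toMonoidHom) r := by
  have hP := hG.periodicSubgroup ψ
  obtain ⟨m, hm, hPm⟩ := exists_periodicSubgroup_eq hP
  exact .fixedSubgroup_of_pow hm (hPm ▸ hP)

theorem isFreeOfRankLE_freeGroup (X : Type*) [Finite X] :
    IsFreeOfRankLE (FreeGroup X) (Nat.card X) :=
  ⟨Nat.card X, le_rfl, ⟨(FreeGroupBasis.ofFreeGroup X).reindex (Finite.equivFin X)⟩⟩

end Periodic

section GeneratorRank

variable {G : Type*} [Group G] {P : Subgroup G}

theorem rk_le_mk_of_closure_eq {S : Set G} (hS : Subgroup.closure S = P) : rk P ≤ Cardinal.mk S :=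
  ciInf_le' (fun S : {S : Set G // Subgroup.closure S = P} ↦ Cardinal.mk S.1) ⟨S, hS⟩

theorem IsFreeOfRankLE.rk_le {r : ℕ} (h : IsFreeOfRankLE P r) : rk P ≤ r := by
  obtain ⟨s, hs, ⟨c⟩⟩ := h
  have hc : Subgroup.closure (P.subtype '' Set.range c) = P := by
    rw [← MonoidHom.map_closure, closure_range_basis c, ← MonoidHom.range_eq_map,
      Subgroup.range_subtype]
  calc rk P ≤ Cardinal.mk (P.subtype '' Set.range c) := rk_le_mk_of_closure_eq hc
    _ ≤ Cardinal.mk (Set.range c) := Cardinal.mk_image_le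
    _ ≤ s := by simpa using Cardinal.mk_range_le_lift (f := c)
    _ ≤ r := by exact_mod_cast hs

end GeneratorRank

end BestvinaHandel

open BestvinaHandel in
theorem fixedSubgroup_rank_le_general {X : Type*} (φ : FreeGroup X ≃* FreeGroup X) :
    rk (fixedSubgroup φ.toMonoidHom) ≤ Cardinal.mk X := by
  cases finite_or_infinite X with
  | inl _ =>
    rw [← Nat.cast_card]
    exact ((isFreeOfRankLE_freeGroup X).fixedSubgroup φ).rk_le
  | inr _ =>
    calc rk (fixedSubgroup φ.toMonoidHom)
      _ ≤ Cardinal.mk (fixedSubgroup φ.toMonoidHom) :=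
        rk_le_mk_of_closure_eq (Subgroup.closure_eq _)
      _ ≤ Cardinal.mk (FreeGroup X) := Cardinal.mk_subtype_le _
      _ = Cardinal.mk X := by
        rw [Cardinal.mk_freeGroup, max_eq_left (Cardinal.aleph0_le_mk X)]

/-- (Bestvina–Handel) The fixed subgroup of an automorphism of `F_n` has rank at most `n`. -/
theorem fixedSubgroup_rank_le (n : ℕ) (φ : FreeGroup (Fin n) ≃* FreeGroup (Fin n)) :
    rk (fixedSubgroup φ.toMonoidHom) ≤ n := by
  simpa using fixedSubgroup_rank_le_general φ
end

section
/- For every automorphism φ of the free group F_n of finite rank n, the fixed subgroup Fix(φ) = {g ∈ F_n : φ(g) = g} is finitely generated. -/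
/-!
The argument is that of Goldstein and Turner. Let `H = Fix φ` act on `F = FreeGroup α` by left
multiplication; its orbits are the fibres of the displacement `δ p = p⁻¹ * φ p`. The
`H`-equivariant map sending `p` to `p * x`, where `x` is the first letter of `δ p`, is a flow on
the vertices of the Cayley tree: if `y` is a letter and `δ p` is at least as long as `φ y`, the
edge from `p` to `p * y` is traversed by it in one direction or the other. Passing to the grand
orbits of the flow collapses all these edges, and what remains is a connected graph with finitely
many `H`-orbits of edges. Vertex stabilizers are cyclic, because an element of `H` preserving a
grand orbit is determined by how far it shifts along the flow. A group acting in this way on a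
connected graph is finitely generated.
-/

section FiniteGeneration

open MulAction Relation

theorem group_fg_of_isCyclic (H : Type*) [Group H] [IsCyclic H] : Group.FG H := by
  obtain ⟨g, hg⟩ := isCyclic_iff_exists_zpowers_eq_top.1 ‹IsCyclic H›
  exact Group.fg_iff.2 ⟨{g}, by rw [← Subgroup.zpowers_eq_closure, hg], Set.finite_singleton g⟩

variable {H W : Type*} [Group H] [MulAction H W]

theorem exists_fg_forall_smul_eq_imp_mem {p : W} (hp : (stabilizer H p).FG) (q : W) :
    ∃ K : Subgroup H, K.FG ∧ ∀ h : H, h • p = q → h ∈ K := by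
  by_cases hex : ∃ g : H, g • p = q
  · obtain ⟨g, rfl⟩ := hex
    refine ⟨Subgroup.zpowers g ⊔ stabilizer H p,
      .sup ⟨{g}, by simp [Subgroup.zpowers_eq_closure]⟩ hp, fun h hgp => ?_⟩
    have hmem : g⁻¹ * h ∈ stabilizer H p := by
      rw [mem_stabilizer_iff, mul_smul, hgp, inv_smul_smul]
    rw [← mul_inv_cancel_left g h]
    exact mul_mem (Subgroup.mem_sup_left (Subgroup.mem_zpowers g)) (Subgroup.mem_sup_right hmem)
  · exact ⟨⊥, .bot, fun h hpq => (hex ⟨h, hpq⟩).elim⟩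

theorem exists_fg_forall_mem_smul_eq_imp_mem {P : Set W} (hP : P.Finite)
    (hstab : ∀ p : W, (stabilizer H p).FG) :
    ∃ K : Subgroup H, K.FG ∧ ∀ p ∈ P, ∀ q ∈ P, ∀ h : H, h • p = q → h ∈ K := by
  choose T hTfg hT using fun p q : W => exists_fg_forall_smul_eq_imp_mem (hstab p) q
  refine ⟨⨆ p ∈ P, ⨆ q ∈ P, T p q, .biSup hP _ fun p _ => .biSup hP _ fun q _ => hTfg p q,
    fun p hp q hq h hpq => ?_⟩
  have hle : T p q ≤ ⨆ p ∈ P, ⨆ q ∈ P, T p q :=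
    (le_iSup₂ (f := fun q (_ : q ∈ P) => T p q) q hq).trans
      (le_iSup₂ (f := fun p (_ : p ∈ P) => ⨆ q ∈ P, T p q) p hp)
  exact hle (hT p q h hpq)

theorem group_fg_of_reflTransGen_edge_orbits {E : Set (W × W)} (hE : E.Finite)
    (hstab : ∀ w : W, (stabilizer H w).FG) {w₀ : W}
    (hconn : ∀ w, ReflTransGen (fun u v => ∃ e ∈ E, (u, v) ∈ orbit H e) w₀ w) :
    Group.FG H := by
  let P : Set W := insert w₀ (Prod.fst '' E ∪ Prod.snd '' E)
  have hP : P.Finite := ((hE.image _).union (hE.image _)).insert _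
  have hw₀ : w₀ ∈ P := Set.mem_insert _ _
  obtain ⟨K, hKfg, hK⟩ := exists_fg_forall_mem_smul_eq_imp_mem hP hstab
  have mem_of_smul_eq {h k : H} {p q : W} (hp : p ∈ P) (hq : q ∈ P) (hk : k ∈ K)
      (heq : h • p = k • q) : h ∈ K := by
    rw [← mul_inv_cancel_left k h]
    exact mul_mem hk (hK p hp q hq _ (by rw [mul_smul, heq, inv_smul_smul]))
  have exists_smul_eq (w : W) : ∃ k ∈ K, ∃ q ∈ P, k • q = w := by
    induction hconn w with
    | refl => exact ⟨1, one_mem K, w₀, hw₀, one_smul H w₀⟩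
    | tail _ hedge ih =>
      obtain ⟨k, hk, q, hq, rfl⟩ := ih
      obtain ⟨⟨a, b⟩, hab, h, heq⟩ := hedge
      obtain ⟨hu, hv⟩ := Prod.ext_iff.1 heq
      have ha : a ∈ P := .inr (.inl ⟨(a, b), hab, rfl⟩)
      have hb : b ∈ P := .inr (.inr ⟨(a, b), hab, rfl⟩)
      exact ⟨h, mem_of_smul_eq ha hq hk hu, b, hb, hv⟩
  have hK_top : K = ⊤ := by
    refine eq_top_iff.2 fun h _ => ?_
    obtain ⟨k, hk, q, hq, heq⟩ := exists_smul_eq (h • w₀)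
    exact mem_of_smul_eq hw₀ hq hk heq.symm
  exact Group.fg_def.2 (hK_top ▸ hKfg)

end FiniteGeneration

section GrandOrbit

open MulAction Relation

/-- The equivalence relation identifying two points whose forward orbits under `f` meet. -/
def grandOrbitSetoid {V : Type*} (f : V → V) : Setoid V where
  r p q := ∃ m n : ℕ, f^[m] p = f^[n] q
  iseqv.refl _ := ⟨0, 0, rfl⟩
  iseqv.symm := fun ⟨m, n, h⟩ => ⟨n, m, h.symm⟩
  iseqv.trans := by
    rintro p q r ⟨m, n, hpq⟩ ⟨m', n', hqr⟩
    refine ⟨m' + m, n + n', ?_⟩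
    rw [Function.iterate_add_apply, hpq, ← Function.iterate_add_apply, add_comm,
      Function.iterate_add_apply, hqr, ← Function.iterate_add_apply]

variable {H V : Type*} [Group H] [MulAction H V]

/-- The space of grand orbits of an equivariant self-map, on which the group still acts. -/
def GrandOrbit (f : V →[H] V) : Type _ := Quotient (grandOrbitSetoid f)

namespace GrandOrbit

variable {f : V →[H] V}

/-- The grand orbit of a point. -/
def mk (f : V →[H] V) (p : V) : GrandOrbit f := Quotient.mk _ p

theorem mk_eq_mk {p q : V} : mk f p = mk f q ↔ ∃ m n : ℕ, f^[m] p = f^[n] q := Quotient.eq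

theorem mk_apply (p : V) : mk f (f p) = mk f p := mk_eq_mk.2 ⟨0, 1, rfl⟩

theorem iterate_smul (f : V →[H] V) (n : ℕ) (h : H) (p : V) : f^[n] (h • p) = h • f^[n] p :=
  (Function.Semiconj.iterate_right (fun q => (map_smul f h q).symm) n p).symm

instance : MulAction H (GrandOrbit f) where
  smul h := Quotient.map (h • ·) fun _ _ ⟨m, n, hpq⟩ =>
    ⟨m, n, by rw [iterate_smul, iterate_smul, hpq]⟩
  one_smul := by rintro ⟨p⟩; exact congrArg (mk f) (one_smul H p)
  mul_smul g h := by rintro ⟨p⟩; exact congrArg (mk f) (mul_smul g h p)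

theorem smul_mk (h : H) (p : V) : h • mk f p = mk f (h • p) := rfl

theorem smul_iterate_add {h : H} {p : V} {m n : ℕ} (heq : h • f^[m] p = f^[n] p) (k : ℕ) :
    h • f^[k + m] p = f^[k + n] p := by
  rw [Function.iterate_add_apply, Function.iterate_add_apply, ← heq, iterate_smul]

/-- The pairs `(h, z)` such that `h` acts on the forward orbit of `p`, far enough along it, as a
shift by `z`. The shift is not a function of `h` when `p` is preperiodic, which is why it is
recorded in the group. -/
def shiftSubgroup (f : V →[H] V) (p : V) : Subgroup (H × Multiplicative ℤ) where
  carrier := {x | ∃ m n : ℕ, x.1 • f^[m] p = f^[n] p ∧ (n : ℤ) - m = x.2.toAdd}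
  one_mem' := ⟨0, 0, by simp, by simp⟩
  mul_mem' := by
    rintro ⟨h, z⟩ ⟨g, w⟩ ⟨m, n, hmn, hz⟩ ⟨m', n', hmn', hw⟩
    refine ⟨m + m', n' + n, ?_, ?_⟩
    · rw [Prod.fst_mul, mul_smul, smul_iterate_add hmn' m, add_comm m, smul_iterate_add hmn n']
    · simp only [Prod.snd_mul, toAdd_mul, ← hz, ← hw]
      push_cast
      ring
  inv_mem' := by
    rintro ⟨h, z⟩ ⟨m, n, hmn, hz⟩
    refine ⟨n, m, ?_, ?_⟩
    · rw [Prod.fst_inv, ← hmn, inv_smul_smul]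
    · simp only [Prod.snd_inv, toAdd_inv, ← hz, neg_sub]

theorem map_fst_shiftSubgroup (f : V →[H] V) (p : V) :
    (shiftSubgroup f p).map (MonoidHom.fst H (Multiplicative ℤ)) = stabilizer H (mk f p) := by
  ext h
  simp only [mem_stabilizer_iff, smul_mk, mk_eq_mk, iterate_smul]
  constructor
  · rintro ⟨_, ⟨m, n, hmn, -⟩, rfl⟩
    exact ⟨m, n, hmn⟩
  · rintro ⟨m, n, hmn⟩
    exact ⟨(h, .ofAdd ((n : ℤ) - m)), ⟨m, n, hmn, rfl⟩, rfl⟩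

variable [IsCancelSMul H V]

theorem eq_of_mem_shiftSubgroup {p : V} {h g : H} {z : Multiplicative ℤ}
    (hh : (h, z) ∈ shiftSubgroup f p) (hg : (g, z) ∈ shiftSubgroup f p) : h = g := by
  obtain ⟨m, n, hmn, hz⟩ := hh
  obtain ⟨m', n', hmn', hz'⟩ := hg
  have hshift : m' + n = m + n' := by dsimp only at hz hz'; omega
  apply IsCancelSMul.right_cancel h g (f^[m' + m] p)
  rw [smul_iterate_add hmn m', hshift, add_comm m' m, smul_iterate_add hmn' m]

theorem isCyclic_shiftSubgroup (f : V →[H] V) (p : V) : IsCyclic (shiftSubgroup f p) := by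
  refine isCyclic_of_injective
    ((MonoidHom.snd H (Multiplicative ℤ)).comp (shiftSubgroup f p).subtype) ?_
  rintro ⟨⟨h, z⟩, hh⟩ ⟨⟨g, _⟩, hg⟩ rfl
  exact Subtype.ext (Prod.ext (eq_of_mem_shiftSubgroup hh hg) rfl)

theorem fg_stabilizer (w : GrandOrbit f) : (stabilizer H w).FG := by
  obtain ⟨p, rfl⟩ : ∃ p, mk f p = w := Quotient.exists_rep w
  have := isCyclic_shiftSubgroup f p
  have := group_fg_of_isCyclic (shiftSubgroup f p)
  rw [← map_fst_shiftSubgroup, ← Group.fg_iff_subgroup_fg]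
  exact Group.fg_of_surjective (MonoidHom.subgroupMap_surjective _ (shiftSubgroup f p))

end GrandOrbit

theorem group_fg_of_reflTransGen_grandOrbit [IsCancelSMul H V] (f : V →[H] V) {E : Set (V × V)}
    (hE : E.Finite) {v₀ : V}
    (hconn : ∀ v, ReflTransGen
      (fun u v => GrandOrbit.mk f u = GrandOrbit.mk f v ∨ ∃ e ∈ E, (u, v) ∈ orbit H e) v₀ v) :
    Group.FG H := by
  refine group_fg_of_reflTransGen_edge_orbits
    (hE.image (Prod.map (GrandOrbit.mk f) (GrandOrbit.mk f))) GrandOrbit.fg_stabilizer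
    (w₀ := GrandOrbit.mk f v₀) fun w => ?_
  obtain ⟨v, rfl⟩ : ∃ v, GrandOrbit.mk f v = w := Quotient.exists_rep w
  refine (hconn v).lift' _ ?_
  rintro u v (heq | ⟨e, he, h, heq⟩)
  · simp only [Function.onFun, heq, ReflTransGen.refl]
  · refine .single ⟨_, ⟨e, he, rfl⟩, h, ?_⟩
    exact congrArg (Prod.map (GrandOrbit.mk f) (GrandOrbit.mk f)) heq

end GrandOrbit

section Displacement

open MulAction

variable {G : Type*} [Group G] (φ : G →* G)

/-- The element `p⁻¹ * φ p` by which `φ` moves `p` on the right. -/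
def displacement (p : G) : G := p⁻¹ * φ p

theorem displacement_mul (p x : G) :
    displacement φ (p * x) = x⁻¹ * displacement φ p * φ x := by
  simp only [displacement, map_mul, mul_inv_rev, mul_assoc]

theorem displacement_eq_iff_mem_orbit {p q : G} :
    displacement φ p = displacement φ q ↔ p ∈ orbit (fixedSubgroup φ) q := by
  constructor
  · intro heq
    have hfix : φ (p * q⁻¹) = p * q⁻¹ := by
      rw [map_mul, map_inv, mul_inv_eq_iff_eq_mul, mul_assoc, ← inv_mul_eq_iff_eq_mul]
      exact heq
    exact ⟨⟨p * q⁻¹, hfix⟩, inv_mul_cancel_right p q⟩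
  · rintro ⟨⟨h, hh : φ h = h⟩, rfl⟩
    change (h * q)⁻¹ * φ (h * q) = q⁻¹ * φ q
    rw [map_mul, hh, mul_inv_rev, mul_assoc, inv_mul_cancel_left]

theorem exists_finite_forall_displacement_mem {D : Set G} (hD : D.Finite) :
    ∃ P : Set G, P.Finite ∧
      ∀ p, displacement φ p ∈ D → ∃ q ∈ P, p ∈ orbit (fixedSubgroup φ) q := by
  obtain ⟨P, -, hP⟩ := Set.exists_subset_bijOn (displacement φ ⁻¹' D) (displacement φ)
  refine ⟨P, hP.finite_iff_finite.2 (hD.subset (Set.image_preimage_subset _ _)), fun p hp => ?_⟩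
  obtain ⟨q, hq, heq⟩ := hP.surjOn ⟨p, hp, rfl⟩
  exact ⟨q, hq, (displacement_eq_iff_mem_orbit φ).1 heq.symm⟩

end Displacement

section FreeGroup

open FreeGroup MulAction Relation

variable {α : Type*}

theorem reflTransGen_one_of_forall_letter {r : FreeGroup α → FreeGroup α → Prop}
    (hr : ∀ p a, r p (p * mk [a])) (p : FreeGroup α) : ReflTransGen r 1 p := by
  obtain ⟨L, rfl⟩ : ∃ L, mk L = p := Quot.exists_rep p
  induction L using List.reverseRecOn with
  | nil => exact .refl
  | append_singleton L a ih => exact ih.tail (mul_mk (L₁ := L) ▸ hr (mk L) a)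

theorem isReduced_invRev {L : List (α × Bool)} (hL : IsReduced L) : IsReduced (invRev L) := by
  classical
  rw [isReduced_iff_reduce_eq, reduce_invRev, hL.reduce_eq]

variable [DecidableEq α]

theorem finite_setOf_norm_lt [Finite α] (N : ℕ) : {g : FreeGroup α | g.norm < N}.Finite :=
  (List.finite_length_lt (α × Bool) N).preimage toWord_injective.injOn

theorem isReduced_cons_toWord {g : FreeGroup α} {a : α} {b : Bool}
    (hg : g.toWord.head? ≠ some (a, !b)) : IsReduced ((a, b) :: g.toWord) := by
  refine List.isChain_cons.2 ⟨?_, isReduced_toWord⟩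
  rintro ⟨_, c⟩ hc rfl
  by_contra hbc
  exact hg (by rwa [← Bool.eq_not_of_ne (Ne.symm hbc)])

theorem norm_inv_mul_letter_mul {g k : FreeGroup α} {a : α} {b : Bool}
    (hg : g.toWord.head? ≠ some (a, b)) (hk : k.toWord.head? ≠ some (a, !b)) :
    (g⁻¹ * mk [(a, b)] * k).norm = g.norm + 1 + k.norm := by
  have hinv : IsReduced (g⁻¹.toWord ++ [(a, b)]) := by
    have := isReduced_invRev (isReduced_cons_toWord (b := !b) (by rwa [Bool.not_not]))
    simpa [invRev, toWord_inv] using this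
  have hred : IsReduced (g⁻¹.toWord ++ [(a, b)] ++ k.toWord) :=
    hinv.append_overlap (isReduced_cons_toWord hk) (List.cons_ne_nil _ _)
  have hmk : g⁻¹ * mk [(a, b)] * k = mk (g⁻¹.toWord ++ [(a, b)] ++ k.toWord) := by
    simp only [← mul_mk, mk_toWord]
  rw [hmk, FreeGroup.norm, toWord_mk, hred.reduce_eq, List.length_append, List.length_append,
    List.length_singleton, ← FreeGroup.norm, ← FreeGroup.norm, norm_inv_eq]

/-- The first letter of the reduced word of `g`, as an element of the group; it is `1` if
`g = 1`. -/
def firstLetter (g : FreeGroup α) : FreeGroup α := mk (g.toWord.take 1)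

theorem firstLetter_eq_of_head? {g : FreeGroup α} {a : α × Bool} (h : g.toWord.head? = some a) :
    firstLetter g = mk [a] := by
  rw [firstLetter, List.take_one, h, Option.toList_some]

-- Otherwise nothing cancels in `y = g⁻¹ * mk [a] * ((mk [a])⁻¹ * g * y)`, so `y` is too long.
theorem firstLetter_eq_or_of_norm_le {g y : FreeGroup α} (hy : y.norm ≤ g.norm) (a : α × Bool) :
    firstLetter g = mk [a] ∨ firstLetter ((mk [a])⁻¹ * g * y) = (mk [a])⁻¹ := by
  obtain ⟨a, b⟩ := a
  by_contra! ⟨hg, hk⟩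
  have hnorm := norm_inv_mul_letter_mul (mt firstLetter_eq_of_head? hg)
    (mt firstLetter_eq_of_head? hk)
  rw [show g⁻¹ * mk [(a, b)] * ((mk [(a, b)])⁻¹ * g * y) = y by group] at hnorm
  omega

variable (φ : FreeGroup α →* FreeGroup α)

/-- The flow on the vertices of the Cayley tree that moves `p` one step along the geodesic from `p`
to `φ p`. -/
def stepToward : FreeGroup α →[fixedSubgroup φ] FreeGroup α where
  toFun p := p * firstLetter (displacement φ p)
  map_smul' h p := by
    have heq : displacement φ (h • p) = displacement φ p :=
      (displacement_eq_iff_mem_orbit φ).2 (mem_orbit p h)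
    simp only [heq, smul_mul_assoc, id]

theorem grandOrbit_mk_eq_mul_letter {p : FreeGroup α} {a : α × Bool}
    (hp : (φ (mk [a])).norm ≤ (displacement φ p).norm) :
    GrandOrbit.mk (stepToward φ) p = GrandOrbit.mk (stepToward φ) (p * mk [a]) := by
  rcases firstLetter_eq_or_of_norm_le hp a with hfirst | hfirst
  · have hstep : stepToward φ p = p * mk [a] := congrArg (p * ·) hfirst
    rw [← hstep, GrandOrbit.mk_apply]
  · have hstep : stepToward φ (p * mk [a]) = p := by
      change p * mk [a] * firstLetter (displacement φ (p * mk [a])) = p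
      rw [displacement_mul, hfirst, mul_inv_cancel_right]
    rw [← GrandOrbit.mk_apply (p * mk [a]), hstep]

end FreeGroup

open FreeGroup in
theorem fixedSubgroup_fg_general {α : Type*} [Finite α] (φ : FreeGroup α →* FreeGroup α) :
    (fixedSubgroup φ).FG := by
  classical
  rw [← Group.fg_iff_subgroup_fg]
  choose P hPfin hP using fun a : α × Bool =>
    exists_finite_forall_displacement_mem φ (finite_setOf_norm_lt (φ (mk [a])).norm)
  let E := ⋃ a : α × Bool, (fun q => (q, q * mk [a])) '' P a
  have hE : E.Finite := Set.finite_iUnion fun a => (hPfin a).image _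
  refine group_fg_of_reflTransGen_grandOrbit (stepToward φ) hE
    (reflTransGen_one_of_forall_letter fun p a => ?_)
  rcases lt_or_ge (displacement φ p).norm (φ (mk [a])).norm with hshort | hlong
  · obtain ⟨q, hq, h, rfl⟩ := hP a p hshort
    exact .inr ⟨(q, q * mk [a]), Set.mem_iUnion.2 ⟨a, q, hq, rfl⟩, h,
      Prod.ext rfl (smul_mul_assoc h q (mk [a])).symm⟩
  · exact .inl (grandOrbit_mk_eq_mul_letter φ hlong)

/-- (Gersten) The fixed subgroup of an automorphism of `F_n` is finitely generated. -/
theorem fixedSubgroup_fg (n : ℕ) (φ : FreeGroup (Fin n) ≃* FreeGroup (Fin n)) :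
    (fixedSubgroup φ.toMonoidHom).FG :=
  fixedSubgroup_fg_general φ.toMonoidHom
end
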